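/- arXiv:1912.01994 — 3 statements merged into one kernel-verified Lean document; each statement's English description precedes it below -/
import Mathlib

section
/- Let a ∈ ℕ be odd with a ≠ 1 and let X = cl(a^ℕ) ∈ 𝒳_2. (1) If a ∈ 1+4ℕ, then X = 1+2^{n(X)-2}ℕ₀. (2) If a ∈ 3+4ℕ, then X = (1+2^{n(X)-1}ℕ₀) ∪ (2^{n(X)-2}-1+2^{n(X)-1}ℕ₀). In both cases i(X) = 2^{n(X)-3}. -/
/-!
A point `y` lies in `cl(a^ℕ)` exactly when `y` is congruent to a positive power of `a` modulo every
power of `2` (`mem_clPow_iff`). Write `a ^ 2 = 1 + 2 ^ s * u` with `u` odd. Repeated squaring gives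
`(a ^ 2) ^ (2 ^ j) = 1 + 2 ^ (s + j) * v` with `v` odd, so every `y ≡ 1 (mod 2 ^ s)` can be
approximated by powers of `a ^ 2`, one binary digit at a time (`exists_pow_dvd_sub`). Splitting the
powers of `a` by the parity of the exponent then shows that `cl(a^ℕ)` consists of the `y` that are
congruent to `1` or to `a` modulo `2 ^ s` (`mem_clPow_iff_dvd`).

Such a union of two classes modulo `2 ^ s` has at most two residues modulo `2 ^ n` for `n ≤ s` and
exactly four for `n = s + 1`; hence `n(X) = s + 1` and `i(X) = 2 ^ s / 4` (`nX_iX_two_classes`).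
If `a ≡ 1 (mod 4)`, then `a ≡ 1 + 2 ^ (s - 1) (mod 2 ^ s)` and the two classes merge into
`1 + 2 ^ (s - 1) ℕ₀`; if `a ≡ 3 (mod 4)`, then `a ≡ 2 ^ (s - 1) - 1 (mod 2 ^ s)`.
-/

open TopologicalSpace

/-- The arithmetic progression `a + bℕ₀ = {a + b*n : n ≥ 0}` inside the positive integers. -/
def golombBasic (a b : ℕ) : Set ℕ+ := {x : ℕ+ | ∃ n : ℕ, (x : ℕ) = a + b * n}

/-- The Golomb topology on the positive integers, generated by the arithmetic
progressions `a + bℕ₀` with coprime `a, b ∈ ℕ`. -/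
instance golombTopology : TopologicalSpace ℕ+ :=
  generateFrom {S : Set ℕ+ | ∃ a b : ℕ, 0 < a ∧ 0 < b ∧ Nat.Coprime a b ∧ S = golombBasic a b}

/-- The positive integers not divisible by `p` (the set `ℕ \ pℕ`). -/
abbrev Np (p : ℕ) : Type := {x : ℕ+ // ¬ p ∣ (x : ℕ)}

/-- The `p`-adic topology on `ℕ \ pℕ`, generated by the traces of the sets
`x + p^nℕ₀`, `x, n ∈ ℕ`. -/
def padicTop (p : ℕ) : TopologicalSpace (Np p) :=
  generateFrom {S : Set (Np p) | ∃ x n : ℕ, 0 < x ∧ 0 < n ∧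
    S = {y : Np p | ∃ k : ℕ, ((y : ℕ+) : ℕ) = x + p ^ n * k}}

/-- Closure of a set of positive integers in the `p`-adic topology on `ℕ \ pℕ`,
viewed again as a set of positive integers. -/
def padicClosure (p : ℕ) (A : Set ℕ+) : Set ℕ+ :=
  Subtype.val '' (@closure (Np p) (padicTop p) (Subtype.val ⁻¹' A))

/-- `a^ℕ = {a^k : k ∈ ℕ}`, the set of positive powers of `a`. -/
def powSet (a : ℕ) : Set ℕ+ := {y : ℕ+ | ∃ k : ℕ, 0 < k ∧ (y : ℕ) = a ^ k}

/-- The closure of `a^ℕ` in the `p`-adic topology on `ℕ \ pℕ`. -/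
def clPow (p a : ℕ) : Set ℕ+ := padicClosure p (powSet a)

/-- The family `𝒳_p` of closures of the sets `a^ℕ` for `a ∈ ℕ \ pℕ`, `a ≠ 1`. -/
def XX (p : ℕ) : Set (Set ℕ+) := {X | ∃ a : ℕ, 0 < a ∧ a ≠ 1 ∧ ¬ p ∣ a ∧ X = clPow p a}

/-- The projection `π_n(X)` of a set of positive integers to `ℤ/p^nℤ`. -/
def pin (p n : ℕ) (X : Set ℕ+) : Set (ZMod (p ^ n)) :=
  (fun y : ℕ+ => ((y : ℕ) : ZMod (p ^ n))) '' X

/-- `n(X)`: the least `n ∈ ℕ` with `X = ℕ ∩ π_n⁻¹(π_n(X))` and `|π_n(X)| ≥ max(p,3)`. -/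
noncomputable def nX (p : ℕ) (X : Set ℕ+) : ℕ :=
  sInf {n : ℕ | 0 < n ∧ X = {y : ℕ+ | ((y : ℕ) : ZMod (p ^ n)) ∈ pin p n X} ∧
    max p 3 ≤ (pin p n X).ncard}

/-- `i(X)`: the index of the subgroup `π_{n(X)}(X)` in the group of units of `ℤ/p^{n(X)}ℤ`. -/
noncomputable def iX (p : ℕ) (X : Set ℕ+) : ℕ :=
  Nat.card ((ZMod (p ^ nX p X))ˣ) / (pin p (nX p X) X).ncard

/-- Every open set of the `2`-adic topology contains, with `y`, all larger elements of the residue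
class of `y` modulo some power of `2`. -/
lemma exists_progression_of_isOpen {U : Set (Np 2)} (hU : @IsOpen _ (padicTop 2) U) :
    ∀ y ∈ U, ∃ N : ℕ, ∀ z : Np 2, ∀ k : ℕ,
      ((z : ℕ+) : ℕ) = ((y : ℕ+) : ℕ) + 2 ^ N * k → z ∈ U := by
  change TopologicalSpace.GenerateOpen _ U at hU
  induction hU with
  | basic S hS =>
    obtain ⟨x, n, -, -, rfl⟩ := hS
    rintro y ⟨j, hj⟩
    refine ⟨n, fun z k hz => ⟨j + k, ?_⟩⟩
    rw [hz, hj]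
    ring
  | univ => exact fun y _ => ⟨0, fun _ _ _ => trivial⟩
  | inter S T _ _ ihS ihT =>
    rintro y ⟨hyS, hyT⟩
    obtain ⟨N, hN⟩ := ihS y hyS
    obtain ⟨M, hM⟩ := ihT y hyT
    refine ⟨N + M, fun z k hz => ⟨hN z (2 ^ M * k) ?_, hM z (2 ^ N * k) ?_⟩⟩
    · rw [hz]; ring
    · rw [hz]; ring
  | sUnion C _ ih =>
    rintro y ⟨S, hS, hyS⟩
    obtain ⟨N, hN⟩ := ih S hS y hyS
    exact ⟨N, fun z k hz => ⟨S, hS, hN z k hz⟩⟩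

lemma mem_clPow_iff {a : ℕ} (ha1 : 1 < a) (hodd : ¬ 2 ∣ a) (y : ℕ+) :
    y ∈ clPow 2 a ↔ ∀ N : ℕ, ∃ k : ℕ, 0 < k ∧ a ^ k ≡ (y : ℕ) [MOD 2 ^ N] := by
  let _ := padicTop 2
  constructor
  · rintro ⟨z, hz, rfl⟩ N
    rw [mem_closure_iff] at hz
    obtain ⟨w, ⟨j, hj⟩, k, hk, hw⟩ := hz
      {w : Np 2 | ∃ k : ℕ, ((w : ℕ+) : ℕ) = ((z : ℕ+) : ℕ) + 2 ^ (N + 1) * k}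
      (TopologicalSpace.isOpen_generateFrom_of_mem
        ⟨((z : ℕ+) : ℕ), N + 1, z.1.pos, Nat.succ_pos _, rfl⟩) ⟨0, by simp⟩
    refine ⟨k, hk, ?_⟩
    rw [← hw, hj, pow_succ, mul_assoc]
    simp [Nat.ModEq]
  · intro h
    have hy : ¬ 2 ∣ (y : ℕ) := by
      obtain ⟨k, -, hk⟩ := h 1
      intro h2
      exact hodd (Nat.prime_two.dvd_of_dvd_pow ((hk.dvd_iff (by simp)).2 h2))
    refine ⟨⟨y, hy⟩, ?_, rfl⟩
    rw [mem_closure_iff]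
    intro U hU hyU
    obtain ⟨N, hN⟩ := exists_progression_of_isOpen hU _ hyU
    obtain ⟨k, hk, hmod⟩ := h N
    -- Adding multiples of `φ (2 ^ N)` to the exponent makes the power exceed `y`.
    have hcop : Nat.Coprime a (2 ^ N) :=
      ((Nat.prime_two.coprime_iff_not_dvd.2 hodd).symm).pow_right N
    have hbig : a ^ (k + Nat.totient (2 ^ N) * (y : ℕ)) ≡ (y : ℕ) [MOD 2 ^ N] := by
      have h1 := (Nat.ModEq.pow_totient hcop).pow (y : ℕ)
      rw [pow_add, pow_mul]
      simpa using hmod.mul h1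
    have hle : (y : ℕ) ≤ a ^ (k + Nat.totient (2 ^ N) * (y : ℕ)) := by
      have h1 : 0 < Nat.totient (2 ^ N) := Nat.totient_pos.2 (by positivity)
      have h2 : (y : ℕ) ≤ k + Nat.totient (2 ^ N) * (y : ℕ) := by nlinarith
      exact h2.trans (Nat.lt_pow_self ha1).le
    obtain ⟨j, hj⟩ := (Nat.modEq_iff_dvd' hle).1 hbig.symm
    have hpos : 0 < a ^ (k + Nat.totient (2 ^ N) * (y : ℕ)) := by positivity
    refine ⟨⟨⟨_, hpos⟩, fun h2 => hodd (Nat.prime_two.dvd_of_dvd_pow h2)⟩,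
      hN _ j ?_, _, Nat.add_pos_left hk _, rfl⟩
    change a ^ (k + Nat.totient (2 ^ N) * (y : ℕ)) = (y : ℕ) + 2 ^ N * j
    omega

lemma pow_two_pow_eq {b u : ℤ} {s : ℕ} (hs : 2 ≤ s) (hu : Odd u) (hb : b = 1 + 2 ^ s * u) (j : ℕ) :
    ∃ v : ℤ, Odd v ∧ b ^ (2 ^ j) = 1 + 2 ^ (s + j) * v := by
  induction j with
  | zero => exact ⟨u, hu, by simpa using hb⟩
  | succ j ih =>
    obtain ⟨v, hv, h⟩ := ih
    obtain ⟨t, rfl⟩ := Nat.exists_eq_add_of_le hs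
    refine ⟨v + 2 * (2 ^ (t + j) * v ^ 2), hv.add_even (even_two_mul _), ?_⟩
    rw [pow_succ 2 j, pow_mul, h]
    ring

/-- The powers of `b` are dense in `1 + 2 ^ s ℤ` for the `2`-adic topology if `b - 1` has exact
`2`-adic valuation `s ≥ 2`. -/
lemma exists_pow_dvd_sub {b u : ℤ} {s : ℕ} (hs : 2 ≤ s) (hu : Odd u) (hb : b = 1 + 2 ^ s * u)
    {y : ℤ} (hy : (2 : ℤ) ^ s ∣ y - 1) (N : ℕ) : ∃ k : ℕ, 0 < k ∧ (2 : ℤ) ^ N ∣ b ^ k - y := by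
  have hbodd : Odd b := by
    rw [hb]
    exact odd_one.add_even (((even_two).pow_of_ne_zero (by omega)).mul_right u)
  suffices H : ∀ j, ∃ k : ℕ, 0 < k ∧ (2 : ℤ) ^ (s + j) ∣ b ^ k - y by
    obtain ⟨k, hk, h⟩ := H N
    exact ⟨k, hk, (pow_dvd_pow 2 (by omega)).trans h⟩
  intro j
  induction j with
  | zero =>
    refine ⟨1, one_pos, ?_⟩
    have h1 : (2 : ℤ) ^ s ∣ b - 1 := ⟨u, by rw [hb]; ring⟩
    simpa using dvd_sub h1 hy
  | succ j ih =>
    obtain ⟨k, hk, w, hw⟩ := ih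
    rcases Int.even_or_odd w with ⟨t, rfl⟩ | hwodd
    · exact ⟨k, hk, t, by rw [hw]; ring⟩
    · -- Multiplying by `b ^ (2 ^ j)` flips the binary digit of weight `2 ^ (s + j)`.
      obtain ⟨v, hv, h⟩ := pow_two_pow_eq hs hu hb j
      obtain ⟨t, ht⟩ := hwodd.add_odd ((hbodd.pow (n := k)).mul hv)
      refine ⟨k + 2 ^ j, Nat.add_pos_left hk _, t, ?_⟩
      rw [pow_add, h]
      linear_combination hw + 2 ^ (s + j) * ht

lemma mem_clPow_iff_dvd {a : ℕ} (ha1 : 1 < a) (hodd : ¬ 2 ∣ a) {s : ℕ} (hs : 2 ≤ s) {u : ℤ}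
    (hu : Odd u) (hau : (a : ℤ) ^ 2 = 1 + 2 ^ s * u) (y : ℕ+) :
    y ∈ clPow 2 a ↔ (2 : ℤ) ^ s ∣ ((y : ℕ) : ℤ) - 1 ∨ (2 : ℤ) ^ s ∣ ((y : ℕ) : ℤ) - a := by
  have hconv : ∀ k N : ℕ, a ^ k ≡ (y : ℕ) [MOD 2 ^ N] ↔ (2 : ℤ) ^ N ∣ (a : ℤ) ^ k - (y : ℕ) := by
    intro k N
    rw [Nat.ModEq.comm, Nat.modEq_iff_dvd]
    push_cast
    rfl
  rw [mem_clPow_iff ha1 hodd]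
  simp only [hconv]
  have hsq : (2 : ℤ) ^ s ∣ (a : ℤ) ^ 2 - 1 := ⟨u, by rw [hau]; ring⟩
  constructor
  · intro h
    obtain ⟨k, -, hk⟩ := h s
    have hev : ∀ t : ℕ, (2 : ℤ) ^ s ∣ (a : ℤ) ^ (2 * t) - 1 := fun t => by
      rw [pow_mul]
      exact hsq.trans (sub_one_dvd_pow_sub_one _ t)
    rcases Nat.even_or_odd' k with ⟨t, rfl | rfl⟩
    · left
      have := dvd_sub (hev t) hk
      simpa using this
    · right
      have := dvd_sub ((hev t).mul_right (a : ℤ)) hk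
      rwa [pow_succ, show ((a : ℤ) ^ (2 * t) - 1) * a - ((a : ℤ) ^ (2 * t) * a - (y : ℕ)) =
        ((y : ℕ) : ℤ) - a by ring] at this
  · rintro (h | h) N
    · obtain ⟨k, hk, h'⟩ := exists_pow_dvd_sub hs hu hau h N
      exact ⟨2 * k, by omega, by rwa [pow_mul]⟩
    · -- Approximate `y * a ≡ a ^ 2 ≡ 1` by an even power of `a` and cancel one factor `a`.
      have h1 : (2 : ℤ) ^ s ∣ ((y : ℕ) : ℤ) * a - 1 := by
        have := dvd_add (h.mul_right (a : ℤ)) hsq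
        rwa [show (((y : ℕ) : ℤ) - a) * a + ((a : ℤ) ^ 2 - 1) = ((y : ℕ) : ℤ) * a - 1 by
          ring] at this
      obtain ⟨k, hk, h'⟩ := exists_pow_dvd_sub hs hu hau h1 N
      refine ⟨2 * k - 1, by omega, ?_⟩
      have hcop : IsCoprime ((2 : ℤ) ^ N) (a : ℤ) := by
        apply IsCoprime.pow_left
        exact_mod_cast Nat.isCoprime_iff_coprime.2 (Nat.prime_two.coprime_iff_not_dvd.2 hodd)
      refine hcop.dvd_of_dvd_mul_right ?_
      rwa [sub_mul, ← pow_succ, show 2 * k - 1 + 1 = 2 * k by omega, pow_mul]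

lemma natCast_pow_eq_iff (n x y : ℕ) :
    ((x : ZMod (2 ^ n)) = (y : ZMod (2 ^ n))) ↔ (2 : ℤ) ^ n ∣ (x : ℤ) - y := by
  rw [eq_comm, ZMod.natCast_eq_natCast_iff, Nat.modEq_iff_dvd]
  push_cast
  rfl

/-- The invariants `n(X)` and `i(X)` of the union of the residue classes of `1` and of some `c`
with `1 < c < 2 ^ s` modulo `2 ^ s`. -/
lemma nX_iX_two_classes {X : Set ℕ+} {s c : ℕ} (hs : 2 ≤ s) (hc0 : 1 < c) (hcs : c < 2 ^ s)
    (hX : ∀ y : ℕ+, y ∈ X ↔ (2 : ℤ) ^ s ∣ ((y : ℕ) : ℤ) - 1 ∨ (2 : ℤ) ^ s ∣ ((y : ℕ) : ℤ) - c) :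
    nX 2 X = s + 1 ∧ iX 2 X = 2 ^ (s - 2) := by
  have hsmall : ∀ n ≤ s, (pin 2 n X).ncard ≤ 2 := by
    intro n hn
    have hsub : pin 2 n X ⊆ {((1 : ℕ) : ZMod (2 ^ n)), ((c : ℕ) : ZMod (2 ^ n))} := by
      rintro _ ⟨y, hy, rfl⟩
      simp only [Set.mem_insert_iff, Set.mem_singleton_iff, natCast_pow_eq_iff]
      have hd : (2 : ℤ) ^ n ∣ 2 ^ s := pow_dvd_pow 2 hn
      exact ((hX y).1 hy).imp (fun h => by simpa using hd.trans h) hd.trans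
    exact (Set.ncard_le_ncard hsub (Set.toFinite _)).trans ((Set.ncard_insert_le _ _).trans (by simp))
  have himg : pin 2 (s + 1) X =
      (fun x : ℕ => (x : ZMod (2 ^ (s + 1)))) '' ({1, 1 + 2 ^ s, c, c + 2 ^ s} : Finset ℕ) := by
    ext x
    constructor
    · rintro ⟨y, hy, rfl⟩
      have key : ∀ d : ℕ, (2 : ℤ) ^ s ∣ ((y : ℕ) : ℤ) - d →
          (2 : ℤ) ^ (s + 1) ∣ (d : ℤ) - (y : ℕ) ∨
          (2 : ℤ) ^ (s + 1) ∣ ((d + 2 ^ s : ℕ) : ℤ) - (y : ℕ) := by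
        rintro d ⟨w, hw⟩
        rcases Int.even_or_odd' w with ⟨t, rfl | rfl⟩
        · left
          exact ⟨-t, by linear_combination -hw⟩
        · right
          exact ⟨-t, by push_cast; linear_combination -hw⟩
      simp only [Set.mem_image, natCast_pow_eq_iff, Finset.mem_coe, Finset.mem_insert,
        Finset.mem_singleton]
      rcases (hX y).1 hy with h | h
      · rcases key 1 (by simpa using h) with h | h
        · exact ⟨1, by simp, h⟩
        · exact ⟨1 + 2 ^ s, by simp, h⟩
      · rcases key c h with h | h
        · exact ⟨c, by simp, h⟩
        · exact ⟨c + 2 ^ s, by simp, h⟩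
    · rintro ⟨d, hd, rfl⟩
      simp only [Finset.mem_coe, Finset.mem_insert, Finset.mem_singleton] at hd
      have hdpos : 0 < d := by rcases hd with rfl | rfl | rfl | rfl <;> omega
      refine ⟨⟨d, hdpos⟩, (hX _).2 ?_, rfl⟩
      rcases hd with rfl | rfl | rfl | rfl <;> simp
  have hcard : (pin 2 (s + 1) X).ncard = 4 := by
    rw [himg, Set.InjOn.ncard_image, Set.ncard_coe_finset]
    · have h2 : 0 < 2 ^ s := by positivity
      rw [Finset.card_insert_of_notMem, Finset.card_insert_of_notMem, Finset.card_insert_of_notMem,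
        Finset.card_singleton] <;> simp <;> omega
    · -- The four representatives are smaller than the modulus.
      have hlt : ∀ d ∈ ({1, 1 + 2 ^ s, c, c + 2 ^ s} : Finset ℕ), d < 2 ^ (s + 1) := by
        intro d hd
        simp only [Finset.mem_insert, Finset.mem_singleton] at hd
        have := pow_succ 2 s
        rcases hd with rfl | rfl | rfl | rfl <;> omega
      intro x hx y hy hxy
      have h := (ZMod.natCast_eq_natCast_iff x y _).1 hxy
      exact h.eq_of_lt_of_lt (hlt x hx) (hlt y hy)
  have hsat : X = {y : ℕ+ | ((y : ℕ) : ZMod (2 ^ (s + 1))) ∈ pin 2 (s + 1) X} := by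
    ext y
    constructor
    · exact fun hy => ⟨y, hy, rfl⟩
    · rintro ⟨z, hz, hzy⟩
      have h := (natCast_pow_eq_iff _ _ _).1 hzy
      have h' : (2 : ℤ) ^ s ∣ ((z : ℕ) : ℤ) - (y : ℕ) := (pow_dvd_pow 2 (Nat.le_succ s)).trans h
      refine (hX y).2 (((hX z).1 hz).imp (fun h1 => ?_) (fun h1 => ?_))
      · simpa using dvd_sub h1 h'
      · simpa using dvd_sub h1 h'
  have hn : nX 2 X = s + 1 := by
    apply le_antisymm
    · exact Nat.sInf_le ⟨Nat.succ_pos s, hsat, by rw [hcard]; norm_num⟩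
    · refine le_csInf ⟨s + 1, Nat.succ_pos s, hsat, by rw [hcard]; norm_num⟩ ?_
      rintro n ⟨-, -, h3⟩
      by_contra hlt
      have := hsmall n (by omega)
      have : 3 ≤ max 2 3 := le_max_right _ _
      omega
  refine ⟨hn, ?_⟩
  rw [iX, hn, hcard, Nat.card_eq_fintype_card, ZMod.card_units_eq_totient,
    Nat.totient_prime_pow Nat.prime_two (Nat.succ_pos s)]
  obtain ⟨t, rfl⟩ := Nat.exists_eq_add_of_le hs
  have h4 : 2 ^ (2 + t) = 2 ^ t * 4 := by ring
  simp [h4]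

lemma mem_golombBasic_iff {c d : ℕ} (hcd : c ≤ d) (y : ℕ+) :
    y ∈ golombBasic c d ↔ (d : ℤ) ∣ ((y : ℕ) : ℤ) - c := by
  constructor
  · rintro ⟨n, hn⟩
    exact ⟨n, by rw [hn]; push_cast; ring⟩
  · rintro ⟨w, hw⟩
    have hy := y.pos
    -- A negative quotient would give `y ≤ c - d ≤ 0`.
    have hw0 : 0 ≤ w := by
      by_contra hneg
      have h1 : (d : ℤ) * w ≤ (d : ℤ) * (-1) :=
        mul_le_mul_of_nonneg_left (by omega) (by positivity)
      omega
    lift w to ℕ using hw0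
    refine ⟨w, ?_⟩
    zify
    linarith

/-- Structure of the elements `X = cl(a^ℕ)` of `𝒳_2`: if `a ≡ 1 (mod 4)` then
`X = 1 + 2^{n(X)-2}ℕ₀`; if `a ≡ 3 (mod 4)` then
`X = (1 + 2^{n(X)-1}ℕ₀) ∪ (2^{n(X)-2} - 1 + 2^{n(X)-1}ℕ₀)`; in both cases
`i(X) = 2^{n(X)-3}`. -/
theorem XX_two_structure (a : ℕ) (ha : 0 < a) (ha1 : a ≠ 1) (hodd : ¬ 2 ∣ a) :
    (a % 4 = 1 → clPow 2 a = golombBasic 1 (2 ^ (nX 2 (clPow 2 a) - 2))) ∧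
    (a % 4 = 3 → clPow 2 a =
      golombBasic 1 (2 ^ (nX 2 (clPow 2 a) - 1)) ∪
      golombBasic (2 ^ (nX 2 (clPow 2 a) - 2) - 1) (2 ^ (nX 2 (clPow 2 a) - 1))) ∧
    iX 2 (clPow 2 a) = 2 ^ (nX 2 (clPow 2 a) - 3) := by
  have hlt : 1 < a := by omega
  -- A factorization `2 ^ m * w` with `w` odd of a positive multiple of `4` has `m ≥ 2`.
  have hfac : ∀ b : ℕ, 0 < b → b % 4 = 0 → ∃ t q : ℕ, b = 2 ^ (t + 2) * (2 * q + 1) := by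
    intro b hb h4
    obtain ⟨m, w, ⟨q, rfl⟩, hw⟩ := Nat.exists_eq_two_pow_mul_odd hb.ne'
    rcases m with _ | _ | t
    · omega
    · omega
    · exact ⟨t, q, hw⟩
  have h13 : a % 4 = 1 ∨ a % 4 = 3 := by omega
  rcases h13 with h1 | h3
  · obtain ⟨t, q, hq⟩ := hfac (a - 1) (by omega) (by omega)
    have haz : (a : ℤ) = 1 + 2 ^ (t + 2) * (2 * q + 1) := by
      have : a = 1 + 2 ^ (t + 2) * (2 * q + 1) := by omega
      exact_mod_cast this
    have hX := mem_clPow_iff_dvd hlt hodd (s := t + 3) (by omega)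
      (u := (2 * q + 1) + 2 * (2 ^ t * (2 * q + 1) ^ 2))
      ((odd_two_mul_add_one _).add_even (even_two_mul _)) (by rw [haz]; ring)
    have hpos : 4 ≤ 2 ^ (t + 2) := by
      have : 0 < 2 ^ t := by positivity
      rw [pow_add]
      omega
    have hsucc : 2 ^ (t + 3) = 2 ^ (t + 2) * 2 := pow_succ 2 (t + 2)
    have hX' : ∀ y : ℕ+, y ∈ clPow 2 a ↔ (2 : ℤ) ^ (t + 3) ∣ ((y : ℕ) : ℤ) - 1 ∨
        (2 : ℤ) ^ (t + 3) ∣ ((y : ℕ) : ℤ) - (1 + 2 ^ (t + 2) : ℕ) := by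
      intro y
      rw [hX y]
      refine or_congr_right ?_
      rw [show ((y : ℕ) : ℤ) - a = ((y : ℕ) : ℤ) - (1 + 2 ^ (t + 2) : ℕ) - 2 ^ (t + 3) * q by
        rw [haz]; push_cast; ring]
      exact dvd_sub_left (dvd_mul_right _ _)
    obtain ⟨hn, hi⟩ := nX_iX_two_classes (by omega) (by omega)
      (by omega) hX'
    rw [hn, hi]
    refine ⟨fun _ => ?_, fun h => by omega, rfl⟩
    ext y
    rw [hX' y, show t + 3 + 1 - 2 = t + 2 from rfl, mem_golombBasic_iff (by omega)]
    push_cast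
    constructor
    · rintro (⟨w, hw⟩ | ⟨w, hw⟩)
      · exact ⟨2 * w, by rw [hw]; ring⟩
      · exact ⟨2 * w + 1, by linear_combination hw⟩
    · rintro ⟨w, hw⟩
      rcases Int.even_or_odd' w with ⟨r, rfl | rfl⟩
      · exact Or.inl ⟨r, by rw [hw]; ring⟩
      · exact Or.inr ⟨r, by linear_combination hw⟩
  · obtain ⟨t, q, hq⟩ := hfac (a + 1) (by omega) (by omega)
    have haz : (a : ℤ) = 2 ^ (t + 2) * (2 * q + 1) - 1 := by
      have : (a : ℤ) + 1 = 2 ^ (t + 2) * (2 * q + 1) := by exact_mod_cast hq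
      linarith
    have hX := mem_clPow_iff_dvd hlt hodd (s := t + 3) (by omega)
      (u := -(2 * q + 1) + 2 * (2 ^ t * (2 * q + 1) ^ 2))
      ((odd_two_mul_add_one _).neg.add_even (even_two_mul _)) (by rw [haz]; ring)
    have hpos : 4 ≤ 2 ^ (t + 2) := by
      have : 0 < 2 ^ t := by positivity
      rw [pow_add]
      omega
    have hsucc : 2 ^ (t + 3) = 2 ^ (t + 2) * 2 := pow_succ 2 (t + 2)
    have hX' : ∀ y : ℕ+, y ∈ clPow 2 a ↔ (2 : ℤ) ^ (t + 3) ∣ ((y : ℕ) : ℤ) - 1 ∨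
        (2 : ℤ) ^ (t + 3) ∣ ((y : ℕ) : ℤ) - (2 ^ (t + 2) - 1 : ℕ) := by
      intro y
      rw [hX y]
      refine or_congr_right ?_
      rw [show ((y : ℕ) : ℤ) - a = ((y : ℕ) : ℤ) - (2 ^ (t + 2) - 1 : ℕ) - 2 ^ (t + 3) * q by
        rw [haz, Nat.cast_sub (by omega)]; push_cast; ring]
      exact dvd_sub_left (dvd_mul_right _ _)
    obtain ⟨hn, hi⟩ := nX_iX_two_classes (by omega) (by omega) (by omega) hX'
    rw [hn, hi]
    refine ⟨fun h => by omega, fun _ => ?_, rfl⟩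
    ext y
    rw [hX' y, show t + 3 + 1 - 2 = t + 2 from rfl, show t + 3 + 1 - 1 = t + 3 from rfl,
      Set.mem_union, mem_golombBasic_iff (by omega), mem_golombBasic_iff (by omega)]
    norm_cast
end

section
/- For any two distinct sets X, Y ∈ 𝒳_2, the strict inclusion X ⊂ Y holds if and only if X ⊆ 1+4ℕ₀ and i(Y) < i(X). -/
/-!
The closed subgroups of `ℤ₂ˣ` topologically generated by an odd integer `a > 1` come in two
families, indexed by `k ≥ 2`. If `a = 1 + 2^k u` with `u` odd, the closure of `a^ℕ` is the residue
class `A_k` of `1` modulo `2^k`. If `a = -1 + 2^k u` with `u` odd, then `a² = 1 + 2^(k+1) u'` with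
`u'` odd, and the closure is the union `B_k` of the classes of `1` and `2^k - 1` modulo `2^(k+1)`.
Both facts rest on `exists_pow_congr`: if `c = 1 + 2^K u` with `u` odd and `K ≥ 2`, then the powers
of `c` reach every residue class modulo `2^(K+m)` that is `1` modulo `2^K`.

Both `A_k` and `B_k` have `i = 2^(k-1)` (`iX_of_count`), since modulo `2^n` each of them has
`2^(n-k)` residues once `n` is large enough for saturation. The inclusions are read off from
residues: `B_k` contains `2^k - 1 ≡ 3 (mod 4)`, so it is contained in no `A_j`, and in `B_j` only
for `j = k`; `A_k` is strictly contained in `A_j` or in `B_j` exactly when `j < k`.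
-/

open TopologicalSpace

/-- The positive integers congruent to `c` modulo `2^K`. -/
def resClass (c : ℤ) (K : ℕ) : Set ℕ+ := {y : ℕ+ | (2 : ℤ) ^ K ∣ ((y : ℕ) : ℤ) - c}

/-- The closure of `a^ℕ` when `a - 1` has 2-adic valuation `k ≥ 2`. -/
def setA (k : ℕ) : Set ℕ+ := resClass 1 k

/-- The closure of `a^ℕ` when `a + 1` has 2-adic valuation `k ≥ 2`. -/
def setB (k : ℕ) : Set ℕ+ := resClass 1 (k + 1) ∪ resClass (2 ^ k - 1) (k + 1)

/-! ### Closures in the 2-adic topology -/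

/-- Every open set contains, with each of its points `y`, a progression `y + 2^n ℕ₀`. -/
lemma isOpen_padicTop_imp {U : Set (Np 2)} (hU : @IsOpen _ (padicTop 2) U) :
    ∀ y ∈ U, ∃ n : ℕ, ∀ z : Np 2, (∃ k : ℕ, ((z : ℕ+) : ℕ) = ((y : ℕ+) : ℕ) + 2 ^ n * k) →
      z ∈ U := by
  induction hU with
  | basic S hS =>
    obtain ⟨x, n, hx, hn, rfl⟩ := hS
    rintro y ⟨k, hk⟩
    refine ⟨n, ?_⟩
    rintro z ⟨m, hm⟩
    exact ⟨k + m, by rw [hm, hk]; ring⟩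
  | univ => intro y _; exact ⟨0, fun _ _ => trivial⟩
  | inter S T _ _ ihS ihT =>
    rintro y ⟨hyS, hyT⟩
    obtain ⟨n, hn⟩ := ihS y hyS
    obtain ⟨m, hm⟩ := ihT y hyT
    refine ⟨n + m, ?_⟩
    rintro z ⟨k, hk⟩
    exact ⟨hn z ⟨2 ^ m * k, by rw [hk]; ring⟩, hm z ⟨2 ^ n * k, by rw [hk]; ring⟩⟩
  | sUnion 𝒮 _ ih =>
    rintro y ⟨S, hS, hy⟩
    obtain ⟨n, hn⟩ := ih S hS y hy
    exact ⟨n, fun z hz => ⟨S, hS, hn z hz⟩⟩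

/-- Modulo `2^n` the powers of an odd `a` are periodic, so congruent powers may be taken large. -/
lemma exists_large_pow {a : ℕ} (ha : ¬ 2 ∣ a) (ha1 : 1 < a) (n j y : ℕ)
    (h : (2 : ℤ) ^ n ∣ (a : ℤ) ^ j - y) :
    ∃ i : ℕ, 0 < i ∧ y ≤ a ^ i ∧ (2 : ℤ) ^ n ∣ (a : ℤ) ^ i - y := by
  have hc : Nat.Coprime a (2 ^ n) :=
    (Nat.Coprime.symm ((Nat.Prime.coprime_iff_not_dvd Nat.prime_two).2 ha)).pow_right n
  have ht : 0 < Nat.totient (2 ^ n) := Nat.totient_pos.2 (by positivity)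
  have h1 : a ^ (Nat.totient (2 ^ n)) ≡ 1 [MOD 2 ^ n] := Nat.ModEq.pow_totient hc
  have h2 : a ^ (j + Nat.totient (2 ^ n) * (y + 1)) ≡ a ^ j [MOD 2 ^ n] := by
    rw [pow_add, pow_mul]
    simpa using (Nat.ModEq.refl (a ^ j)).mul (h1.pow (y + 1))
  refine ⟨j + Nat.totient (2 ^ n) * (y + 1), by positivity, ?_, ?_⟩
  · have h3 : y + 1 ≤ j + Nat.totient (2 ^ n) * (y + 1) := by nlinarith
    have h4 := Nat.lt_pow_self (n := j + Nat.totient (2 ^ n) * (y + 1)) ha1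
    omega
  · have h5 := (Nat.modEq_iff_dvd.1 h2.symm)
    push_cast at h5
    have := dvd_add h5 h
    simpa using this

lemma mem_clPow_iff_s16 {a : ℕ} (ha : ¬ 2 ∣ a) (ha1 : 1 < a) (y : ℕ+) :
    y ∈ clPow 2 a ↔ ¬ 2 ∣ (y : ℕ) ∧ ∀ n : ℕ, ∃ j : ℕ, (2 : ℤ) ^ n ∣ (a : ℤ) ^ j - (y : ℕ) := by
  unfold clPow padicClosure
  constructor
  · rintro ⟨z, hz, rfl⟩
    refine ⟨z.2, fun n => ?_⟩
    rw [@mem_closure_iff _ (padicTop 2)] at hz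
    have ho : @IsOpen _ (padicTop 2)
        {w : Np 2 | ∃ k : ℕ, ((w : ℕ+) : ℕ) = (z : ℕ+) + 2 ^ (n + 1) * k} :=
      isOpen_generateFrom_of_mem ⟨_, n + 1, (z : ℕ+).pos, Nat.succ_pos _, rfl⟩
    obtain ⟨w, ⟨k, hk⟩, ⟨j, _, hj⟩⟩ := hz _ ho ⟨0, by simp⟩
    refine ⟨j, 2 * k, ?_⟩
    have : ((a ^ j : ℕ) : ℤ) = (((z : ℕ+) : ℕ) + 2 ^ (n + 1) * k : ℕ) := by
      rw [← hk]; exact_mod_cast hj.symm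
    push_cast at this
    rw [this]; ring
  · rintro ⟨hy, h⟩
    refine ⟨⟨y, hy⟩, ?_, rfl⟩
    rw [@mem_closure_iff _ (padicTop 2)]
    intro U hU hyU
    obtain ⟨n, hn⟩ := isOpen_padicTop_imp hU _ hyU
    obtain ⟨j, hj⟩ := h n
    obtain ⟨i, hi, hle, hd⟩ := exists_large_pow ha ha1 n j y hj
    have hodd : ¬ 2 ∣ a ^ i := fun hh => ha (Nat.prime_two.dvd_of_dvd_pow hh)
    have hpos : 0 < a ^ i := by positivity
    refine ⟨⟨⟨a ^ i, hpos⟩, hodd⟩, hn _ ?_, ⟨i, hi, rfl⟩⟩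
    have hd' : 2 ^ n ∣ a ^ i - (y : ℕ) := by
      zify [hle]
      exact hd
    obtain ⟨k, hk⟩ := hd'
    exact ⟨k, by change a ^ i = (y : ℕ) + _; omega⟩

/-! ### The two families of closures -/

/-- Squaring `1 + 2^k u` with `u` odd, `k ≥ 2` raises the exponent of `2` by exactly one. -/
lemma pow_two_pow_eq_s16 {c : ℤ} {K : ℕ} (hK : 2 ≤ K) (hc : ∃ u : ℤ, Odd u ∧ c = 1 + 2 ^ K * u)
    (m : ℕ) : ∃ u : ℤ, Odd u ∧ c ^ (2 ^ m) = 1 + 2 ^ (K + m) * u := by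
  induction m with
  | zero => simpa using hc
  | succ m ih =>
    obtain ⟨u, hu, h⟩ := ih
    obtain ⟨L, hL⟩ : ∃ L, K + m = L + 2 := ⟨K + m - 2, by omega⟩
    refine ⟨u + 2 ^ (L + 1) * u ^ 2, ?_, ?_⟩
    · exact hu.add_even (((even_two.pow_of_ne_zero (by omega))).mul_right _)
    · rw [pow_succ, pow_mul, h, ← add_assoc, hL]; ring

/-- The coset `b · c^ℕ` is dense in the residue class of `b` modulo `2^K`. The exponent is
corrected one binary digit at a time: multiplying by `c^(2^m)` flips the digit of weight
`2^(K+m)` and preserves the lower ones. -/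
lemma exists_pow_congr {c b y : ℤ} {K : ℕ} (hK : 2 ≤ K)
    (hc : ∃ u : ℤ, Odd u ∧ c = 1 + 2 ^ K * u) (hb : Odd b) (hy : (2 : ℤ) ^ K ∣ y - b) (m : ℕ) :
    ∃ j : ℕ, (2 : ℤ) ^ (K + m) ∣ b * c ^ j - y := by
  induction m with
  | zero => exact ⟨0, by simpa using (dvd_sub_comm.1 hy)⟩
  | succ m ih =>
    obtain ⟨j, v, hv⟩ := ih
    rcases Int.even_or_odd v with ⟨w, hw⟩ | hvo
    · exact ⟨j, w, by rw [hv, hw, ← add_assoc]; ring⟩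
    · obtain ⟨u, hu, h⟩ := pow_two_pow_eq_s16 hK hc m
      have hco : Odd c := by
        obtain ⟨u', _, rfl⟩ := hc
        exact odd_one.add_even ((even_two.pow_of_ne_zero (by omega)).mul_right _)
      have hodd : Odd (b * c ^ j * u) := (hb.mul hco.pow).mul hu
      obtain ⟨w, hw⟩ := hvo.add_odd hodd
      refine ⟨j + 2 ^ m, w, ?_⟩
      rw [pow_add, h, ← add_assoc, pow_succ]
      linear_combination hv + 2 ^ (K + m) * hw

lemma exists_odd_factor {x : ℤ} (hx : x ≠ 0) : ∃ (k : ℕ) (u : ℤ), Odd u ∧ x = 2 ^ k * u := by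
  have hf : FiniteMultiplicity (2 : ℤ) x := Int.finiteMultiplicity_iff.2 ⟨by decide, hx⟩
  obtain ⟨u, h1, h2⟩ := hf.exists_eq_pow_mul_and_not_dvd
  exact ⟨_, u, by rwa [← Int.not_even_iff_odd, even_iff_two_dvd], h1⟩

lemma two_le_of_four_dvd {k : ℕ} {u : ℤ} (hu : Odd u) (h : (4 : ℤ) ∣ 2 ^ k * u) : 2 ≤ k := by
  obtain ⟨w, rfl⟩ := hu
  by_contra hk
  interval_cases k <;> omega

lemma not_two_dvd_of {y : ℕ} {c : ℤ} (hc : Odd c) {K : ℕ} (hK : 1 ≤ K)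
    (h : (2 : ℤ) ^ K ∣ y - c) : ¬ 2 ∣ y := by
  have h2 : (2 : ℤ) ∣ y - c := (dvd_pow_self 2 (by omega)).trans h
  obtain ⟨w, rfl⟩ := hc
  omega

lemma clPow_eq_setA {a k : ℕ} (ha : ¬ 2 ∣ a) (ha1 : 1 < a) (hk : 2 ≤ k)
    (hu : ∃ u : ℤ, Odd u ∧ (a : ℤ) = 1 + 2 ^ k * u) : clPow 2 a = setA k := by
  ext y
  rw [mem_clPow_iff_s16 ha ha1]
  constructor
  · rintro ⟨_, h⟩
    obtain ⟨j, hj⟩ := h k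
    have h1 : (2 : ℤ) ^ k ∣ (a : ℤ) ^ j - 1 := by
      obtain ⟨u, _, hu⟩ := hu
      have : (a : ℤ) - 1 ∣ (a : ℤ) ^ j - 1 := sub_one_dvd_pow_sub_one _ _
      exact (Dvd.intro u (by rw [hu]; ring)).trans this
    have := dvd_sub h1 hj
    change (2 : ℤ) ^ k ∣ _
    simpa using this
  · intro h
    change (2 : ℤ) ^ k ∣ _ at h
    refine ⟨not_two_dvd_of odd_one (by omega) h, fun n => ?_⟩
    obtain ⟨j, hj⟩ := exists_pow_congr hk hu odd_one h n
    exact ⟨j, (pow_dvd_pow 2 (Nat.le_add_left n k)).trans (by simpa using hj)⟩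

lemma odd_two_pow_sub_one {k : ℕ} (hk : 2 ≤ k) : Odd ((2 : ℤ) ^ k - 1) :=
  (even_two.pow_of_ne_zero (by omega)).sub_odd odd_one

lemma clPow_eq_setB {a k : ℕ} (ha : ¬ 2 ∣ a) (ha1 : 1 < a) (hk : 2 ≤ k)
    (hu : ∃ u : ℤ, Odd u ∧ (a : ℤ) = -1 + 2 ^ k * u) : clPow 2 a = setB k := by
  obtain ⟨u, huo, hu⟩ := hu
  obtain ⟨L, rfl⟩ : ∃ L, k = L + 2 := ⟨k - 2, by omega⟩
  have hsq : ∃ v : ℤ, Odd v ∧ (a : ℤ) ^ 2 = 1 + 2 ^ (L + 2 + 1) * v := by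
    refine ⟨-u + 2 ^ (L + 1) * u ^ 2, ?_, by rw [hu]; ring⟩
    exact huo.neg.add_even ((even_two.pow_of_ne_zero (by omega)).mul_right _)
  have hac : (2 : ℤ) ^ (L + 2 + 1) ∣ (a : ℤ) - (2 ^ (L + 2) - 1) := by
    obtain ⟨w, hw⟩ := huo
    exact ⟨w, by rw [hu, hw]; ring⟩
  have hao : Odd (a : ℤ) := by
    rw [← Int.not_even_iff_odd, even_iff_two_dvd]; omega
  ext y
  rw [mem_clPow_iff_s16 ha ha1]
  constructor
  · rintro ⟨_, h⟩
    obtain ⟨j, hj⟩ := h (L + 2 + 1)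
    have h1 : ∀ i : ℕ, (2 : ℤ) ^ (L + 2 + 1) ∣ ((a : ℤ) ^ 2) ^ i - 1 := by
      intro i
      obtain ⟨v, _, hv⟩ := hsq
      exact (Dvd.intro v (by rw [hv]; ring)).trans (sub_one_dvd_pow_sub_one ((a : ℤ) ^ 2) i)
    rcases Nat.even_or_odd' j with ⟨i, rfl | rfl⟩
    · left
      change (2 : ℤ) ^ (L + 2 + 1) ∣ _
      rw [pow_mul] at hj
      simpa using dvd_sub (h1 i) hj
    · right
      change (2 : ℤ) ^ (L + 2 + 1) ∣ _
      rw [pow_succ (a : ℤ), pow_mul] at hj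
      have := dvd_add (dvd_sub ((h1 i).mul_right (a : ℤ)) hj) hac
      rwa [show (((a : ℤ) ^ 2) ^ i - 1) * a - (((a : ℤ) ^ 2) ^ i * a - (y : ℕ)) +
        (a - (2 ^ (L + 2) - 1)) = ((y : ℕ) : ℤ) - (2 ^ (L + 2) - 1) by ring] at this
  · rintro (h | h)
    · change (2 : ℤ) ^ (L + 2 + 1) ∣ _ at h
      refine ⟨not_two_dvd_of odd_one (by omega) h, fun n => ?_⟩
      obtain ⟨j, hj⟩ := exists_pow_congr (by omega) hsq odd_one h n
      refine ⟨2 * j, (pow_dvd_pow 2 (Nat.le_add_left n (L + 2 + 1))).trans ?_⟩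
      rw [pow_mul]
      simpa using hj
    · change (2 : ℤ) ^ (L + 2 + 1) ∣ _ at h
      refine ⟨not_two_dvd_of (odd_two_pow_sub_one hk) (by omega) h, fun n => ?_⟩
      have h' : (2 : ℤ) ^ (L + 2 + 1) ∣ (y : ℕ) - (a : ℤ) := by
        simpa using dvd_sub h hac
      obtain ⟨j, hj⟩ := exists_pow_congr (by omega) hsq hao h' n
      refine ⟨2 * j + 1, (pow_dvd_pow 2 (Nat.le_add_left n (L + 2 + 1))).trans ?_⟩
      rw [pow_succ (a : ℤ), pow_mul, mul_comm]
      exact hj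

lemma XX_two_cases {X : Set ℕ+} (hX : X ∈ XX 2) :
    ∃ k : ℕ, 2 ≤ k ∧ (X = setA k ∨ X = setB k) := by
  obtain ⟨a, ha0, ha1, ha, rfl⟩ := hX
  have h1 : 1 < a := by omega
  have h4 : (4 : ℤ) ∣ (a : ℤ) - 1 ∨ (4 : ℤ) ∣ (a : ℤ) + 1 := by omega
  rcases h4 with h4 | h4
  · obtain ⟨k, u, hu, h⟩ := exists_odd_factor (x := (a : ℤ) - 1) (by omega)
    have hk := two_le_of_four_dvd hu (h ▸ h4)
    exact ⟨k, hk, Or.inl (clPow_eq_setA ha h1 hk ⟨u, hu, by rw [← h]; ring⟩)⟩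
  · obtain ⟨k, u, hu, h⟩ := exists_odd_factor (x := (a : ℤ) + 1) (by omega)
    have hk := two_le_of_four_dvd hu (h ▸ h4)
    exact ⟨k, hk, Or.inr (clPow_eq_setB ha h1 hk ⟨u, hu, by rw [← h]; ring⟩)⟩

/-! ### The index -/

lemma pin_resClass_ncard {c : ℤ} (hc : 0 < c) {K n : ℕ} (hn : K ≤ n) :
    (pin 2 n (resClass c K)).ncard = 2 ^ (n - K) := by
  obtain ⟨m, rfl⟩ := Nat.exists_eq_add_of_le hn
  have hp : ((2 ^ (K + m) : ℕ) : ℤ) = 2 ^ K * 2 ^ m := by push_cast; ring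
  have key : pin 2 (K + m) (resClass c K) =
      (fun i : ℕ => ((c + 2 ^ K * i : ℤ) : ZMod (2 ^ (K + m)))) ''
        (Finset.range (2 ^ m) : Set ℕ) := by
    ext z
    constructor
    · rintro ⟨y, ⟨w, hw⟩, rfl⟩
      have hm : (0 : ℤ) < 2 ^ m := by positivity
      have h0 := Int.emod_nonneg w hm.ne'
      have h1 := Int.emod_lt_of_pos w hm
      refine ⟨(w % 2 ^ m).toNat, ?_, ?_⟩
      · simp only [Finset.coe_range, Set.mem_Iio]
        zify
        rw [Int.toNat_of_nonneg h0]
        exact h1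
      · have : (((y : ℕ) : ℤ) : ZMod (2 ^ (K + m))) = ((y : ℕ) : ZMod (2 ^ (K + m))) := by simp
        simp only
        rw [← this, Int.toNat_of_nonneg h0, ZMod.intCast_eq_intCast_iff_dvd_sub, hp]
        refine ⟨w / 2 ^ m, ?_⟩
        linear_combination hw - (2 : ℤ) ^ K * (Int.emod_add_mul_ediv w (2 ^ m))
    · rintro ⟨i, _, rfl⟩
      have hpos : 0 < c + 2 ^ K * (i : ℤ) := by positivity
      have hcast : ((c + 2 ^ K * (i : ℤ)).toNat : ℤ) = c + 2 ^ K * (i : ℤ) :=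
        Int.toNat_of_nonneg hpos.le
      refine ⟨⟨(c + 2 ^ K * (i : ℤ)).toNat, by omega⟩, ?_, ?_⟩
      · change (2 : ℤ) ^ K ∣ ((c + 2 ^ K * (i : ℤ)).toNat : ℤ) - c
        rw [hcast]
        exact ⟨i, by ring⟩
      · change (((c + 2 ^ K * (i : ℤ)).toNat : ℕ) : ZMod (2 ^ (K + m))) = _
        rw [← Int.cast_natCast, hcast]
  rw [key, Set.InjOn.ncard_image, Set.ncard_coe_finset, Finset.card_range, Nat.add_sub_cancel_left]
  intro i hi j hj hij
  simp only [Finset.coe_range, Set.mem_Iio] at hi hj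
  simp only at hij
  rw [ZMod.intCast_eq_intCast_iff_dvd_sub, hp] at hij
  have h2 : (2 : ℤ) ^ K * 2 ^ m ∣ 2 ^ K * ((j : ℤ) - i) := by
    convert hij using 1; ring
  have h3 := (mul_dvd_mul_iff_left (by positivity : (2 : ℤ) ^ K ≠ 0)).1 h2
  have h4 : i ≡ j [MOD 2 ^ m] := by
    rw [Nat.modEq_iff_dvd]; exact_mod_cast h3
  exact Nat.ModEq.eq_of_lt_of_lt h4 hi hj

lemma pin_setA_ncard {k n : ℕ} (hn : k ≤ n) : (pin 2 n (setA k)).ncard = 2 ^ (n - k) :=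
  pin_resClass_ncard one_pos hn

lemma four_dvd_two_pow {k : ℕ} (hk : 2 ≤ k) : (4 : ℤ) ∣ 2 ^ k := by
  simpa using pow_dvd_pow (2 : ℤ) hk

lemma resClass_mod_four {c : ℤ} {K : ℕ} (hK : 2 ≤ K) {y : ℕ+} (h : y ∈ resClass c K) :
    (4 : ℤ) ∣ (y : ℕ) - c := (four_dvd_two_pow hK).trans h

lemma two_pow_sub_one_pos {k : ℕ} (hk : 2 ≤ k) : (0 : ℤ) < 2 ^ k - 1 := by
  have := Int.le_of_dvd (by positivity) (four_dvd_two_pow hk)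
  omega

lemma pin_setB_ncard {k n : ℕ} (hk : 2 ≤ k) (hn : k + 1 ≤ n) :
    (pin 2 n (setB k)).ncard = 2 ^ (n - k) := by
  have : NeZero (2 ^ n) := ⟨by positivity⟩
  have hu : pin 2 n (setB k) =
      pin 2 n (resClass 1 (k + 1)) ∪ pin 2 n (resClass (2 ^ k - 1) (k + 1)) := Set.image_union ..
  rw [hu, Set.ncard_union_eq ?_ (Set.toFinite _) (Set.toFinite _), pin_resClass_ncard one_pos hn,
    pin_resClass_ncard (two_pow_sub_one_pos hk) hn]
  · rw [show n - k = n - (k + 1) + 1 by omega]; ring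
  · rw [Set.disjoint_left]
    rintro _ ⟨x, hx, rfl⟩ ⟨y, hy, hxy⟩
    have hx4 := resClass_mod_four (by omega) hx
    have hy4 := resClass_mod_four (by omega) hy
    have hk4 := four_dvd_two_pow hk
    simp only at hxy
    rw [ZMod.natCast_eq_natCast_iff, Nat.modEq_iff_dvd] at hxy
    push_cast at hxy
    have := (four_dvd_two_pow (by omega : 2 ≤ n)).trans hxy
    omega

/-- If a set is a union of classes modulo `2^K`, it is saturated at every level `n ≥ K`. -/
lemma saturated {X : Set ℕ+} {K n : ℕ} (hn : K ≤ n)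
    (h : ∀ x y : ℕ+, (2 : ℤ) ^ K ∣ (y : ℕ) - ((x : ℕ) : ℤ) → x ∈ X → y ∈ X) :
    X = {y : ℕ+ | ((y : ℕ) : ZMod (2 ^ n)) ∈ pin 2 n X} := by
  ext y
  refine ⟨fun hy => ⟨y, hy, rfl⟩, ?_⟩
  rintro ⟨x, hx, hxy⟩
  refine h x y ?_ hx
  simp only at hxy
  rw [ZMod.natCast_eq_natCast_iff, Nat.modEq_iff_dvd] at hxy
  push_cast at hxy
  exact (pow_dvd_pow 2 hn).trans hxy

lemma resClass_congr {c : ℤ} {K : ℕ} {x y : ℕ+} (h : (2 : ℤ) ^ K ∣ (y : ℕ) - ((x : ℕ) : ℤ))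
    (hx : x ∈ resClass c K) : y ∈ resClass c K := by
  change (2 : ℤ) ^ K ∣ _ at hx
  change (2 : ℤ) ^ K ∣ _
  simpa using dvd_add h hx

lemma one_add_two_pow_mem_iff {n K : ℕ} :
    (⟨1 + 2 ^ n, by positivity⟩ : ℕ+) ∈ resClass 1 K ↔ K ≤ n := by
  change (2 : ℤ) ^ K ∣ ((1 + 2 ^ n : ℕ) : ℤ) - 1 ↔ _
  push_cast
  rw [add_sub_cancel_left]
  exact pow_dvd_pow_iff (by decide) (by decide)

/-- The index is `2^(k-1)` at any admissible level, so `n(X)` need not be determined: it suffices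
that admissible levels exist (`K + 2` is one) and are at least `K`, with `2^(n-k)` residues there. -/
lemma iX_of_count {X : Set ℕ+} {k K : ℕ} (hk : 2 ≤ k) (hkK : k ≤ K)
    (hsat : ∀ x y : ℕ+, (2 : ℤ) ^ K ∣ (y : ℕ) - ((x : ℕ) : ℤ) → x ∈ X → y ∈ X)
    (hcount : ∀ n, K ≤ n → (pin 2 n X).ncard = 2 ^ (n - k))
    (h1 : (1 : ℕ+) ∈ X)
    (hlow : ∀ n, 2 ≤ n → (⟨1 + 2 ^ n, by positivity⟩ : ℕ+) ∈ X → K ≤ n) :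
    iX 2 X = 2 ^ (k - 1) := by
  have hne : {n : ℕ | 0 < n ∧ X = {y : ℕ+ | ((y : ℕ) : ZMod (2 ^ n)) ∈ pin 2 n X} ∧
      max 2 3 ≤ (pin 2 n X).ncard}.Nonempty := by
    refine ⟨K + 2, by omega, saturated (by omega) hsat, ?_⟩
    rw [hcount _ (by omega)]
    calc max 2 3 ≤ 2 ^ 2 := by norm_num
      _ ≤ _ := Nat.pow_le_pow_right (by norm_num) (by omega)
  obtain ⟨h0, hs, hc⟩ := Nat.sInf_mem hne
  change 0 < nX 2 X at h0
  change X = {y : ℕ+ | ((y : ℕ) : ZMod (2 ^ nX 2 X)) ∈ pin 2 (nX 2 X) X} at hs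
  change max 2 3 ≤ (pin 2 (nX 2 X) X).ncard at hc
  unfold iX
  generalize nX 2 X = n at *
  have : NeZero (2 ^ n) := ⟨by positivity⟩
  have hn2 : 2 ≤ n := by
    have h3 : (pin 2 n X).ncard ≤ 2 ^ n := by
      have := Set.ncard_le_card (pin 2 n X)
      rwa [Nat.card_eq_fintype_card, ZMod.card] at this
    by_contra hlt
    have : n = 1 := by omega
    subst this
    simp at hc h3
    omega
  have hKn : K ≤ n := by
    refine hlow n hn2 ?_
    rw [hs]
    refine ⟨1, h1, ?_⟩
    change ((1 : ℕ) : ZMod (2 ^ n)) = ((1 + 2 ^ n : ℕ) : ZMod (2 ^ n))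
    rw [Nat.cast_add, ZMod.natCast_self, add_zero]
  rw [hcount n hKn, Nat.card_eq_fintype_card, ZMod.card_units_eq_totient,
    Nat.totient_prime_pow Nat.prime_two h0, Nat.add_sub_cancel (n := 1) (m := 1), mul_one,
    Nat.pow_div (by omega) (by norm_num)]
  congr 1
  omega

lemma one_mem_resClass (K : ℕ) : (1 : ℕ+) ∈ resClass 1 K := by
  change (2 : ℤ) ^ K ∣ ((1 : ℕ) : ℤ) - 1
  simp

lemma iX_setA {k : ℕ} (hk : 2 ≤ k) : iX 2 (setA k) = 2 ^ (k - 1) :=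
  iX_of_count hk le_rfl (fun _ _ h hx => resClass_congr h hx) (fun _ hn => pin_setA_ncard hn)
    (one_mem_resClass k) (fun _ _ h => one_add_two_pow_mem_iff.1 h)

lemma one_add_two_pow_mem_setB {k n : ℕ} (hk : 2 ≤ k) (hn : 2 ≤ n)
    (h : (⟨1 + 2 ^ n, by positivity⟩ : ℕ+) ∈ setB k) : k + 1 ≤ n := by
  rcases h with h | h
  · exact one_add_two_pow_mem_iff.1 h
  · exfalso
    have h4 := resClass_mod_four (by omega) h
    have hk4 := four_dvd_two_pow hk
    have hn4 := four_dvd_two_pow hn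
    simp only [PNat.mk_coe] at h4
    push_cast at h4
    omega

lemma iX_setB {k : ℕ} (hk : 2 ≤ k) : iX 2 (setB k) = 2 ^ (k - 1) :=
  iX_of_count hk (Nat.le_succ k)
    (fun _ _ h hx => hx.imp (fun hx => resClass_congr h hx) (fun hx => resClass_congr h hx))
    (fun _ hn => pin_setB_ncard hk hn) (Or.inl (one_mem_resClass _))
    (fun _ hn h => one_add_two_pow_mem_setB hk hn h)

/-! ### Inclusions -/

lemma resClass_anti {c : ℤ} {j k : ℕ} (h : j ≤ k) : resClass c k ⊆ resClass c j :=
  fun _ hy => (pow_dvd_pow 2 h).trans hy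

/-- The element of `setB k` which is `3` modulo `4`. -/
lemma exists_mem_setB {k : ℕ} (hk : 2 ≤ k) :
    ∃ y : ℕ+, y ∈ setB k ∧ ((y : ℕ) : ℤ) = 2 ^ k - 1 := by
  have hp := two_pow_sub_one_pos hk
  have hc : ((2 ^ k - 1 : ℤ).toNat : ℤ) = 2 ^ k - 1 := Int.toNat_of_nonneg hp.le
  refine ⟨⟨(2 ^ k - 1 : ℤ).toNat, by omega⟩, Or.inr ?_, hc⟩
  change (2 : ℤ) ^ (k + 1) ∣ ((2 ^ k - 1 : ℤ).toNat : ℤ) - (2 ^ k - 1)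
  rw [hc, sub_self]
  exact dvd_zero _

lemma setA_subset_golombBasic {k : ℕ} (hk : 2 ≤ k) : setA k ⊆ golombBasic 1 4 := by
  intro y hy
  have h4 := resClass_mod_four hk hy
  have := y.pos
  exact ⟨((y : ℕ) - 1) / 4, by omega⟩

lemma not_setB_subset_golombBasic {k : ℕ} (hk : 2 ≤ k) : ¬ setB k ⊆ golombBasic 1 4 := by
  intro h
  obtain ⟨y, hy, hy'⟩ := exists_mem_setB hk
  obtain ⟨n, hn⟩ := h hy
  have := four_dvd_two_pow hk
  omega

lemma setA_ssubset_setA {j k : ℕ} : setA k ⊂ setA j ↔ j < k := by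
  constructor
  · intro h
    by_contra hle
    exact h.2 (resClass_anti (by omega))
  · intro h
    refine ⟨resClass_anti h.le, fun h' => ?_⟩
    have := one_add_two_pow_mem_iff.1 (h' (one_add_two_pow_mem_iff.2 le_rfl))
    omega

lemma setA_ssubset_setB {j k : ℕ} (hj : 2 ≤ j) (hk : 2 ≤ k) : setA k ⊂ setB j ↔ j < k := by
  constructor
  · intro h
    exact one_add_two_pow_mem_setB hj hk (h.1 (one_add_two_pow_mem_iff.2 le_rfl))
  · intro h
    exact ⟨fun y hy => Or.inl (resClass_anti h hy), fun h' =>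
      not_setB_subset_golombBasic hj (h'.trans (setA_subset_golombBasic hk))⟩

lemma eq_of_setB_subset_setB {j k : ℕ} (hj : 2 ≤ j) (hk : 2 ≤ k) (h : setB k ⊆ setB j) :
    k = j := by
  obtain ⟨y, hy, hy'⟩ := exists_mem_setB hk
  have hk4 := four_dvd_two_pow hk
  rcases h hy with h | h
  · have h4 := resClass_mod_four (by omega) h
    omega
  · change (2 : ℤ) ^ (j + 1) ∣ _ at h
    rw [hy', sub_sub_sub_cancel_right] at h
    rcases lt_trichotomy k j with hlt | heq | hgt
    · exfalso
      have h1 : (2 : ℤ) ^ (k + 1) ∣ 2 ^ k - 2 ^ j := (pow_dvd_pow 2 (by omega)).trans h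
      have h2 := dvd_add h1 (pow_dvd_pow (2 : ℤ) (show k + 1 ≤ j by omega))
      rw [sub_add_cancel, pow_dvd_pow_iff (by decide) (by decide)] at h2
      omega
    · exact heq
    · exfalso
      have h2 := dvd_sub (pow_dvd_pow (2 : ℤ) (show j + 1 ≤ k by omega)) h
      rw [sub_sub_cancel, pow_dvd_pow_iff (by decide) (by decide)] at h2
      omega

lemma two_pow_pred_lt_iff {j k : ℕ} (hj : 2 ≤ j) (hk : 2 ≤ k) :
    2 ^ (j - 1) < 2 ^ (k - 1) ↔ j < k := by
  rw [Nat.pow_lt_pow_iff_right (by norm_num)]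
  omega

/-- For distinct `X, Y ∈ 𝒳_2`, the strict inclusion `X ⊂ Y` holds iff `X ⊆ 1 + 4ℕ₀`
and `i(Y) < i(X)`. -/
theorem XX_two_ssubset_iff (X Y : Set ℕ+) (hX : X ∈ XX 2) (hY : Y ∈ XX 2) (hne : X ≠ Y) :
    X ⊂ Y ↔ X ⊆ golombBasic 1 4 ∧ iX 2 Y < iX 2 X := by
  obtain ⟨k, hk, rfl | rfl⟩ := XX_two_cases hX <;> obtain ⟨j, hj, rfl | rfl⟩ := XX_two_cases hY
  · rw [iX_setA hk, iX_setA hj, two_pow_pred_lt_iff hj hk, setA_ssubset_setA]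
    exact (and_iff_right (setA_subset_golombBasic hk)).symm
  · rw [iX_setA hk, iX_setB hj, two_pow_pred_lt_iff hj hk, setA_ssubset_setB hj hk]
    exact (and_iff_right (setA_subset_golombBasic hk)).symm
  · exact ⟨fun h => (not_setB_subset_golombBasic hk
      (h.1.trans (setA_subset_golombBasic hj))).elim,
      fun h => (not_setB_subset_golombBasic hk h.1).elim⟩
  · exact ⟨fun h => (hne (by rw [eq_of_setB_subset_setB hj hk h.1])).elim,
      fun h => (not_setB_subset_golombBasic hk h.1).elim⟩
end

section
/- For any homeomorphism h : ℕ_τ → ℕ_τ of the Golomb space and any n ∈ {1,2,3}, one has h(n) = n. -/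
/-!
Coprimality of distinct points is a topological relation in the Golomb space. Indeed, three
distinct numbers are pairwise coprime exactly when, for every nonempty open set `W`, they have
neighbourhoods whose closures meet inside the closure of `W` (`Concentrated`). Since the closure
of `a + bℕ₀` consists of the numbers that, for each prime power `p ^ k` exactly dividing `b`, are
divisible by `p` or congruent to `a` modulo `p ^ k`, this says that each prime is excluded by at
least two of the three neighbourhoods. Two distinct numbers are coprime iff they extend to such a
triple. Hence a homeomorphism `h` fixes `1`, the only number coprime to all others, and induces a
permutation `σ` of the primes (`Corr h p q` means `q = σ p`): it sends multiples of `p` to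
multiples of `σ p`, and the powers `{p ^ k : k ≥ 1}` onto those of `σ p`.

The `p`-adic topology on `ℕ \ pℕ` is generated by the relatively clopen sets of the Golomb topology
(`exists_modEq_subset`), so `h` is a homeomorphism from the `p`-adic topology on `ℕ \ pℕ` to the
`σ p`-adic one. Consequently it carries the `p`-adic closure of the powers of a prime `r` to the
`σ p`-adic closure of the powers of `σ r` (`InCl.map`). These closures are traces of procyclic
subgroups of the group of `p`-adic units, which gives the following facts.

* If `p` is odd, some prime has dense powers, but for `p = 2` none has. Hence `σ 2 = 2`.
* If `p ≥ 5`, there are three pairwise incomparable closures, but for `p = 3` any two generators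
  congruent modulo `3` have comparable closures. Hence `σ 3 = 3`.
* Any closure containing a prime `q` contains all powers of `q`, whereas for `q ∈ {2, 3}` and
  `k ≥ 2` some closure contains `q ^ k` but not `q`. Hence `h 2 = 2` and `h 3 = 3`.
-/

open TopologicalSpace

/-! ### Powers of a number modulo powers of a prime -/

/-- In a finite cyclic group the solutions of `x ^ orderOf r = 1` are the powers of `r`. -/
lemma mem_zpowers_of_pow_orderOf {G : Type*} [Group G] [Finite G] [IsCyclic G] {r x : G}
    (hx : x ^ orderOf r = 1) : x ∈ Subgroup.zpowers r := by
  classical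
  have := Fintype.ofFinite G
  have hsub : (Finset.univ.filter fun a : G => a ∈ Subgroup.zpowers r) ⊆
      (Finset.univ.filter fun a : G => a ^ orderOf r = 1) := by
    intro a ha
    simp only [Finset.mem_filter, Finset.mem_univ, true_and] at ha ⊢
    obtain ⟨k, rfl⟩ := Subgroup.mem_zpowers_iff.1 ha
    rw [← zpow_natCast, ← zpow_mul, mul_comm, zpow_mul, zpow_natCast, pow_orderOf_eq_one, one_zpow]
  have hcard : (Finset.univ.filter fun a : G => a ^ orderOf r = 1).card ≤
      (Finset.univ.filter fun a : G => a ∈ Subgroup.zpowers r).card := by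
    refine (IsCyclic.card_pow_eq_one_le (orderOf_pos r)).trans (le_of_eq ?_)
    rw [← Fintype.card_zpowers, Fintype.card_subtype]
  have heq := Finset.eq_of_subset_of_card_le hsub hcard
  have hmem : x ∈ (Finset.univ.filter fun a : G => a ^ orderOf r = 1) := by simp [hx]
  rw [← heq] at hmem
  simpa using hmem

lemma exists_pow_modEq {p n : ℕ} (hp : p.Prime) (hp2 : p ≠ 2) {r x : ℕ} (hr : ¬ p ∣ r)
    (hx : ¬ p ∣ x) (h : (x : ZMod (p ^ n)) ^ orderOf (r : ZMod (p ^ n)) = 1) :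
    ∃ k, 0 < k ∧ r ^ k ≡ x [MOD p ^ n] := by
  have : NeZero (p ^ n) := ⟨pow_ne_zero _ hp.ne_zero⟩
  have := ZMod.isCyclic_units_of_prime_pow p hp hp2 n
  have cr : r.Coprime (p ^ n) := ((hp.coprime_iff_not_dvd.2 hr).symm).pow_right n
  have cx : x.Coprime (p ^ n) := ((hp.coprime_iff_not_dvd.2 hx).symm).pow_right n
  have h1 : orderOf (ZMod.unitOfCoprime r cr) = orderOf (r : ZMod (p ^ n)) := by
    rw [← orderOf_units, ZMod.coe_unitOfCoprime]
  have h2 : (ZMod.unitOfCoprime x cx) ∈ Subgroup.zpowers (ZMod.unitOfCoprime r cr) := by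
    apply mem_zpowers_of_pow_orderOf
    rw [h1]
    ext
    simpa using h
  rw [← mem_powers_iff_mem_zpowers] at h2
  obtain ⟨k, hk⟩ := h2
  have hk : (ZMod.unitOfCoprime r cr) ^ k = ZMod.unitOfCoprime x cx := hk
  refine ⟨k + orderOf (ZMod.unitOfCoprime r cr), ?_, ?_⟩
  · have := orderOf_pos (ZMod.unitOfCoprime r cr)
    omega
  · rw [← ZMod.natCast_eq_natCast_iff]
    have := congrArg (Units.val) (pow_add (ZMod.unitOfCoprime r cr) k
      (orderOf (ZMod.unitOfCoprime r cr)))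
    rw [pow_orderOf_eq_one, mul_one, hk] at this
    simpa using this

lemma natCast_pow_eq_one {p n x : ℕ} (hx : x ≡ 1 [MOD p]) :
    (x : ZMod (p ^ (n + 1))) ^ (p ^ n) = 1 := by
  have h1 : (p : ℤ) ∣ (x : ℤ) - 1 := by
    have := (Nat.modEq_iff_dvd.1 hx.symm)
    simpa using this
  have h2 := dvd_sub_pow_of_dvd_sub h1 n
  have h3 : ((((x : ℤ) ^ p ^ n - 1 ^ p ^ n : ℤ)) : ZMod (p ^ (n + 1))) = 0 := by
    rw [ZMod.intCast_zmod_eq_zero_iff_dvd]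
    exact_mod_cast h2
  push_cast at h3
  rw [one_pow, sub_eq_zero] at h3
  exact h3

/-- The exact order of `1 + p c` modulo `p ^ (n + 1)`, for `p` odd and `p ∤ c`. -/
lemma orderOf_natCast {p : ℕ} (hp : p.Prime) (hp2 : p ≠ 2) {r c : ℕ} (hr : r = 1 + p * c)
    (hc : ¬ p ∣ c) (n : ℕ) : orderOf (r : ZMod (p ^ (n + 1))) = p ^ n := by
  have := ZMod.orderOf_one_add_mul_prime hp hp2 (c : ℤ) (by exact_mod_cast hc) n
  rw [hr]
  push_cast at this ⊢
  exact this

lemma not_dvd_of_modEq {p n a b : ℕ} (hn : n ≠ 0) (hab : a ≡ b [MOD p ^ n]) (hb : ¬ p ∣ b) :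
    ¬ p ∣ a := fun h =>
  hb ((Nat.ModEq.dvd_iff hab (dvd_pow_self p hn)).1 h)

/-- There is a prime whose powers are `p`-adically dense in `1 + pℕ₀`. -/
lemma exists_prime_principal {p : ℕ} (hp : p.Prime) (hp2 : p ≠ 2) :
    ∃ r, r.Prime ∧ r ≡ 1 [MOD p] ∧
      ∀ x, x ≡ 1 [MOD p] → ∀ n, ∃ k, 0 < k ∧ r ^ k ≡ x [MOD p ^ n] := by
  have hcop : (1 + p).Coprime (p ^ 2) := by
    apply Nat.Coprime.pow_right
    simp
  obtain ⟨r, hgt, hr, hmod⟩ := Nat.forall_exists_prime_gt_and_modEq (1 + p)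
    (pow_ne_zero 2 hp.ne_zero) hcop
  obtain ⟨t, ht⟩ := (Nat.modEq_iff_dvd' hgt.le).1 hmod.symm
  have hreq : r = 1 + p * (1 + p * t) := by
    have : r = 1 + p + p ^ 2 * t := by omega
    rw [this]; ring
  have hnd : ∀ x, x ≡ 1 [MOD p] → ¬ p ∣ x := fun x hx hd => by
    have := (Nat.ModEq.dvd_iff hx (dvd_refl p)).1 hd
    exact hp.one_lt.ne' (Nat.dvd_one.1 this)
  have hr1 : r ≡ 1 [MOD p] := by
    rw [hreq]
    simp [Nat.ModEq]
  refine ⟨r, hr, hr1, fun x hx n => ?_⟩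
  apply exists_pow_modEq hp hp2 (hnd r hr1) (hnd x hx)
  cases n with
  | zero =>
    have : Subsingleton (ZMod (p ^ 0)) := by rw [pow_zero]; infer_instance
    exact Subsingleton.elim _ _
  | succ n =>
    rw [orderOf_natCast hp hp2 hreq ?_ n]
    · exact natCast_pow_eq_one hx
    · intro hd
      have := (Nat.dvd_add_left (dvd_mul_right p t)).1 hd
      exact hp.one_lt.ne' (Nat.dvd_one.1 this)

/-- For every odd prime `p`, some prime has `p`-adically dense powers in `ℕ \ pℕ`:
take a prime congruent to a primitive root modulo `p ^ 2`. -/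
lemma exists_prime_dense {p : ℕ} (hp : p.Prime) (hp2 : p ≠ 2) :
    ∃ r, r.Prime ∧ ∀ x, ¬ p ∣ x → ∀ n, ∃ k, 0 < k ∧ r ^ k ≡ x [MOD p ^ n] := by
  have : NeZero (p ^ 2) := ⟨pow_ne_zero _ hp.ne_zero⟩
  have := ZMod.isCyclic_units_of_prime_pow p hp hp2 2
  obtain ⟨g, hg⟩ := IsCyclic.exists_generator (α := (ZMod (p ^ 2))ˣ)
  obtain ⟨r, -, hr, hrg⟩ := Nat.forall_exists_prime_gt_and_eq_mod g.isUnit 0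
  have hog : orderOf (r : ZMod (p ^ 2)) = p * (p - 1) := by
    rw [hrg, orderOf_units, orderOf_eq_card_of_forall_mem_zpowers hg, Nat.card_eq_fintype_card,
      ZMod.card_units_eq_totient, Nat.totient_prime_pow_succ hp, pow_one]
  have hp3 : 3 ≤ p := by have := hp.two_le; omega
  have hrp : ¬ p ∣ r := by
    intro hd
    have hu : IsUnit (r : ZMod (p ^ 2)) := hrg ▸ g.isUnit
    rw [ZMod.isUnit_iff_coprime] at hu
    exact Nat.not_coprime_of_dvd_of_dvd hp.one_lt hd (dvd_pow_self p two_ne_zero) hu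
  -- Fermat: `r ^ (p - 1) = 1 + p c`, and `p ∤ c` because the order modulo `p ^ 2` is `p (p - 1)`.
  have hfer : r ^ (p - 1) ≡ 1 [MOD p] := by
    have := Nat.ModEq.pow_totient (hp.coprime_iff_not_dvd.2 hrp).symm
    rwa [Nat.totient_prime hp] at this
  have hpos : 1 ≤ r ^ (p - 1) := Nat.one_le_pow _ _ hr.pos
  obtain ⟨c, hc⟩ := (Nat.modEq_iff_dvd' hpos).1 hfer.symm
  have hc' : r ^ (p - 1) = 1 + p * c := by omega
  have hcp : ¬ p ∣ c := by
    rintro ⟨d, rfl⟩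
    have h1 : (r : ZMod (p ^ 2)) ^ (p - 1) = 1 := by
      have : ((r ^ (p - 1) : ℕ) : ZMod (p ^ 2)) = ((1 + p ^ 2 * d : ℕ) : ZMod (p ^ 2)) := by
        rw [hc']; congr 1; ring
      rw [Nat.cast_add, Nat.cast_mul, ZMod.natCast_self] at this
      simpa using this
    have h2 := orderOf_dvd_of_pow_eq_one h1
    rw [hog] at h2
    have h3 := Nat.le_of_dvd (by omega) h2
    have h4 : 3 * (p - 1) ≤ p * (p - 1) := Nat.mul_le_mul_right _ hp3
    omega
  refine ⟨r, hr, fun x hx n => exists_pow_modEq hp hp2 hrp hx ?_⟩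
  cases n with
  | zero =>
    have : Subsingleton (ZMod (p ^ 0)) := by rw [pow_zero]; infer_instance
    exact Subsingleton.elim _ _
  | succ n =>
    have d1 : p ^ n ∣ orderOf (r : ZMod (p ^ (n + 1))) := by
      rw [← orderOf_natCast hp hp2 hc' hcp n, Nat.cast_pow]
      exact orderOf_pow_dvd _
    have d2 : p - 1 ∣ orderOf (r : ZMod (p ^ (n + 1))) := by
      have e1 : (r : ZMod (p ^ (n + 1))) ^ orderOf (r : ZMod (p ^ (n + 1))) = 1 :=
        pow_orderOf_eq_one _
      have e2 : r ^ orderOf (r : ZMod (p ^ (n + 1))) ≡ 1 [MOD p] := by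
        have : r ^ orderOf (r : ZMod (p ^ (n + 1))) ≡ 1 [MOD p ^ (n + 1)] := by
          rw [← ZMod.natCast_eq_natCast_iff, Nat.cast_pow, e1, Nat.cast_one]
        exact this.of_dvd (dvd_pow_self p (Nat.succ_ne_zero n))
      generalize orderOf (r : ZMod (p ^ (n + 1))) = o at e2
      have e3 : (r : ZMod (p ^ 2)) ^ (o * p) = 1 := by
        have := natCast_pow_eq_one (n := 1) e2
        rw [pow_one, Nat.cast_pow, ← pow_mul] at this
        exact this
      have e4 := orderOf_dvd_of_pow_eq_one e3
      rw [hog, mul_comm o p] at e4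
      exact Nat.dvd_of_mul_dvd_mul_left hp.pos e4
    have hcop : (p ^ n).Coprime (p - 1) := by
      apply Nat.Coprime.pow_left
      rw [hp.coprime_iff_not_dvd]
      exact Nat.not_dvd_of_pos_of_lt (by omega) (by omega)
    obtain ⟨m, hm⟩ := hcop.mul_dvd_of_dvd_of_dvd d1 d2
    rw [hm, pow_mul]
    have e5 : x ^ (p ^ n * (p - 1)) ≡ 1 [MOD p ^ (n + 1)] := by
      have := Nat.ModEq.pow_totient
        (((hp.coprime_iff_not_dvd.2 hx).symm).pow_right (n + 1))
      rwa [Nat.totient_prime_pow_succ hp] at this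
    rw [← ZMod.natCast_eq_natCast_iff] at e5
    push_cast at e5
    rw [e5, one_pow]

/-- The powers of `19` are `5`-adically dense in `{x : x ≡ ±1 mod 5}`. -/
lemma nineteen_pow {x : ℕ} (hx5 : ¬ 5 ∣ x) (hx : x ^ 2 ≡ 1 [MOD 5]) (n : ℕ) :
    ∃ k, 0 < k ∧ 19 ^ k ≡ x [MOD 5 ^ n] := by
  have h5 : Nat.Prime 5 := by norm_num
  refine exists_pow_modEq h5 (by norm_num) (by norm_num) hx5 ?_
  cases n with
  | zero =>
    have : Subsingleton (ZMod (5 ^ 0)) := by rw [pow_zero]; infer_instance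
    exact Subsingleton.elim _ _
  | succ n =>
    have d1 : 5 ^ n ∣ orderOf ((19 : ℕ) : ZMod (5 ^ (n + 1))) := by
      rw [← orderOf_natCast h5 (by norm_num) (show 19 ^ 2 = 1 + 5 * 72 by norm_num)
        (by norm_num) n, Nat.cast_pow]
      exact orderOf_pow_dvd _
    have d2 : 2 ∣ orderOf ((19 : ℕ) : ZMod (5 ^ (n + 1))) := by
      have e1 : ((19 : ℕ) : ZMod (5 ^ (n + 1))) ^ orderOf ((19 : ℕ) : ZMod (5 ^ (n + 1))) = 1 :=
        pow_orderOf_eq_one _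
      have e2 : 19 ^ orderOf ((19 : ℕ) : ZMod (5 ^ (n + 1))) ≡ 1 [MOD 5] := by
        have : 19 ^ orderOf ((19 : ℕ) : ZMod (5 ^ (n + 1))) ≡ 1 [MOD 5 ^ (n + 1)] := by
          rw [← ZMod.natCast_eq_natCast_iff, Nat.cast_pow, e1, Nat.cast_one]
        exact this.of_dvd (dvd_pow_self 5 (Nat.succ_ne_zero n))
      generalize orderOf ((19 : ℕ) : ZMod (5 ^ (n + 1))) = o at e2
      by_contra ho
      obtain ⟨j, rfl⟩ : ∃ j, o = 2 * j + 1 := ⟨o / 2, by omega⟩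
      rw [pow_succ, pow_mul] at e2
      have e3 : (19 ^ 2) ^ j * 19 ≡ 1 ^ j * 19 [MOD 5] :=
        Nat.ModEq.mul_right 19 (Nat.ModEq.pow j (by decide))
      have e4 := e3.symm.trans e2
      rw [one_pow] at e4
      exact absurd e4 (by decide)
    have hcop : (5 ^ n).Coprime 2 := Nat.Coprime.pow_left _ (by norm_num)
    obtain ⟨m, hm⟩ := hcop.mul_dvd_of_dvd_of_dvd d1 d2
    have e5 := natCast_pow_eq_one (n := n) hx
    rw [hm, pow_mul, mul_comm (5 ^ n) 2, pow_mul]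
    rw [Nat.cast_pow] at e5
    rw [e5, one_pow]

/-- Modulo powers of `3`, the subgroups generated by two congruent units modulo `3` are
comparable: their orders both are powers of `3`, or both are twice a power of `3`. -/
lemma three_adic_comparable {s t : ℕ} (hs : ¬ 3 ∣ s) (ht : ¬ 3 ∣ t) (hst : s % 3 = t % 3) :
    (∀ n, ∃ k, 0 < k ∧ s ^ k ≡ t [MOD 3 ^ n]) ∨ (∀ n, ∃ k, 0 < k ∧ t ^ k ≡ s [MOD 3 ^ n]) := by
  have h3 := Nat.prime_three
  have key : ∀ n, (∃ k, 0 < k ∧ s ^ k ≡ t [MOD 3 ^ n]) ∨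
      (∃ k, 0 < k ∧ t ^ k ≡ s [MOD 3 ^ n]) := by
    intro n
    cases n with
    | zero =>
      left
      exact ⟨1, one_pos, by simp [Nat.modEq_one]⟩
    | succ n =>
      have hord : ∃ e, ∀ x, ¬ 3 ∣ x → x % 3 = s % 3 →
          ∃ a, orderOf (x : ZMod (3 ^ (n + 1))) = e * 3 ^ a := by
        by_cases hs1 : s % 3 = 1
        · refine ⟨1, fun x _ hx => ?_⟩
          have := orderOf_dvd_of_pow_eq_one
            (natCast_pow_eq_one (p := 3) (n := n) (x := x) (by simp [Nat.ModEq, hx, hs1]))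
          obtain ⟨a, -, ha⟩ := (Nat.dvd_prime_pow h3).1 this
          exact ⟨a, by rw [ha, one_mul]⟩
        · have hs2 : s % 3 = 2 := by omega
          refine ⟨2, fun x hx3 hx => ?_⟩
          have hx2 : x ^ 2 ≡ 1 [MOD 3] := by
            rw [Nat.ModEq, Nat.pow_mod, hx, hs2]
          have h1 := natCast_pow_eq_one (p := 3) (n := n) hx2
          rw [Nat.cast_pow, ← pow_mul] at h1
          have h2 := orderOf_dvd_of_pow_eq_one h1
          have h3' : 2 ∣ orderOf (x : ZMod (3 ^ (n + 1))) := by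
            have e1 : (x : ZMod (3 ^ (n + 1))) ^ orderOf (x : ZMod (3 ^ (n + 1))) = 1 :=
              pow_orderOf_eq_one _
            have e2 : x ^ orderOf (x : ZMod (3 ^ (n + 1))) ≡ 1 [MOD 3] := by
              have : x ^ orderOf (x : ZMod (3 ^ (n + 1))) ≡ 1 [MOD 3 ^ (n + 1)] := by
                rw [← ZMod.natCast_eq_natCast_iff, Nat.cast_pow, e1, Nat.cast_one]
              exact this.of_dvd (dvd_pow_self 3 (Nat.succ_ne_zero n))
            generalize orderOf (x : ZMod (3 ^ (n + 1))) = o at e2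
            by_contra ho
            obtain ⟨j, rfl⟩ : ∃ j, o = 2 * j + 1 := ⟨o / 2, by omega⟩
            rw [pow_succ, pow_mul] at e2
            have e3 : (x ^ 2) ^ j * x ≡ 1 ^ j * x [MOD 3] :=
              Nat.ModEq.mul_right x (Nat.ModEq.pow j hx2)
            have e4 := e3.symm.trans e2
            rw [one_pow, one_mul] at e4
            have : x % 3 = 1 := e4
            omega
          obtain ⟨m, hm⟩ := h3'
          rw [hm] at h2
          obtain ⟨a, -, ha⟩ := (Nat.dvd_prime_pow h3).1 (Nat.dvd_of_mul_dvd_mul_left two_pos h2)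
          exact ⟨a, by rw [hm, ha]⟩
      obtain ⟨e, he⟩ := hord
      obtain ⟨a, ha⟩ := he s hs rfl
      obtain ⟨b, hb⟩ := he t ht hst.symm
      rcases le_total b a with hab | hab
      · left
        apply exists_pow_modEq h3 (by norm_num) hs ht
        rw [← orderOf_dvd_iff_pow_eq_one, ha, hb]
        exact mul_dvd_mul_left _ (pow_dvd_pow 3 hab)
      · right
        apply exists_pow_modEq h3 (by norm_num) ht hs
        rw [← orderOf_dvd_iff_pow_eq_one, ha, hb]
        exact mul_dvd_mul_left _ (pow_dvd_pow 3 hab)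
  -- Solvability modulo `3 ^ n` descends to smaller `n`, so one alternative holds for every `n`.
  by_contra! hcon
  obtain ⟨⟨n, hn⟩, ⟨m, hm⟩⟩ := hcon
  rcases key (max n m) with ⟨k, hk, h⟩ | ⟨k, hk, h⟩
  · exact hn k hk (h.of_dvd (pow_dvd_pow 3 (le_max_left n m)))
  · exact hm k hk (h.of_dvd (pow_dvd_pow 3 (le_max_right n m)))

/-- For a prime `p ≥ 5` there are three primes none of which is a `p`-adic limit of powers of
another. They approximate powers of a primitive root with the exponents `p - 1`, `2p`, `p ^ 2`,
pairwise incomparable divisors of `(p - 1) p ^ 2`. -/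
lemma exists_antichain {p : ℕ} (hp : p.Prime) (hp5 : 5 ≤ p) :
    ∃ r : Fin 3 → ℕ, (∀ i, (r i).Prime ∧ r i ≠ p) ∧
      ∀ i j, i ≠ j → ∀ k, ¬ (r j) ^ k ≡ r i [MOD p ^ 3] := by
  have hp2 : p ≠ 2 := by omega
  have : NeZero (p ^ 3) := ⟨pow_ne_zero _ hp.ne_zero⟩
  have := ZMod.isCyclic_units_of_prime_pow p hp hp2 3
  obtain ⟨g, hg⟩ := IsCyclic.exists_generator (α := (ZMod (p ^ 3))ˣ)
  have hog : orderOf g = p ^ 2 * (p - 1) := by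
    rw [orderOf_eq_card_of_forall_mem_zpowers hg, Nat.card_eq_fintype_card,
      ZMod.card_units_eq_totient, Nat.totient_prime_pow_succ hp]
  let d : Fin 3 → ℕ := ![p - 1, 2 * p, p ^ 2]
  have heven : 2 ∣ p - 1 := by
    have := hp.eq_two_or_odd
    omega
  have hcop : (p - 1).Coprime p := by
    rw [Nat.coprime_comm, hp.coprime_iff_not_dvd]
    exact Nat.not_dvd_of_pos_of_lt (by omega) (by omega)
  have hd : ∀ i, d i ∣ p ^ 2 * (p - 1) := by
    intro i
    fin_cases i
    · exact dvd_mul_left _ _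
    · change 2 * p ∣ _
      rw [mul_comm 2 p]
      exact mul_dvd_mul (dvd_pow_self p two_ne_zero) heven
    · exact dvd_mul_right _ _
  have h1 : ¬ p - 1 ∣ 2 * p := fun h => by
    have := Nat.le_of_dvd two_pos (hcop.dvd_of_dvd_mul_right h)
    omega
  have h2 : ¬ p - 1 ∣ p ^ 2 := fun h => by
    have := (hcop.pow_right 2).eq_one_of_dvd h
    omega
  have h3 : ¬ p ∣ p - 1 := (hp.coprime_iff_not_dvd).1 hcop.symm
  have h4 : ¬ 2 * p ∣ p ^ 2 := fun h => by
    rw [pow_two] at h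
    have := Nat.dvd_of_mul_dvd_mul_right hp.pos h
    have := (Nat.prime_dvd_prime_iff_eq Nat.prime_two hp).1 this
    omega
  have h5 : ¬ p ^ 2 ∣ 2 * p := fun h => by
    rw [pow_two] at h
    have := Nat.le_of_dvd two_pos (Nat.dvd_of_mul_dvd_mul_right hp.pos h)
    omega
  have hinc : ∀ i j, i ≠ j → ¬ d j ∣ d i := by
    intro i j hij h
    fin_cases i <;> fin_cases j <;> simp [d] at hij h
    · exact h3 ((dvd_mul_left p 2).trans h)
    · exact h3 ((dvd_pow_self p two_ne_zero).trans h)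
    · exact h1 h
    · exact h5 h
    · exact h2 h
    · exact h4 h
  have hex : ∀ i, ∃ r > p, r.Prime ∧ (r : ZMod (p ^ 3)) = (g ^ d i : (ZMod (p ^ 3))ˣ) :=
    fun i => Nat.forall_exists_prime_gt_and_eq_mod (g ^ d i).isUnit p
  choose r hr using hex
  refine ⟨r, fun i => ⟨(hr i).2.1, (hr i).1.ne'⟩, fun i j hij k hk => hinc i j hij ?_⟩
  rw [← ZMod.natCast_eq_natCast_iff, Nat.cast_pow, (hr i).2.2, (hr j).2.2] at hk
  have hk' : g ^ (d j * k) = g ^ d i := by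
    rw [pow_mul]
    ext
    rw [Units.val_pow_eq_pow_val]
    exact hk
  rw [pow_eq_pow_iff_modEq, hog] at hk'
  exact (Nat.ModEq.dvd_iff hk' (hd j)).1 (dvd_mul_right _ _)

/-! ### Basic open sets and closures in the Golomb space -/

lemma mem_golombBasic_self (x : ℕ+) (b : ℕ) : x ∈ golombBasic x b := ⟨0, by simp⟩

lemma golombBasic_mono {a b c : ℕ} (h : b ∣ c) : golombBasic a c ⊆ golombBasic a b := by
  rintro z ⟨n, hn⟩
  obtain ⟨d, rfl⟩ := h
  exact ⟨d * n, by rw [hn, mul_assoc]⟩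

lemma modEq_of_mem_golombBasic {a b : ℕ} {z : ℕ+} (h : z ∈ golombBasic a b) :
    (z : ℕ) ≡ a [MOD b] := by
  obtain ⟨n, hn⟩ := h
  rw [hn]
  simp [Nat.ModEq]

lemma isOpen_golombBasic {a : ℕ+} {b : ℕ} (hb : 0 < b) (hab : Nat.Coprime a b) :
    IsOpen (golombBasic a b) :=
  TopologicalSpace.isOpen_generateFrom_of_mem ⟨a, b, a.pos, hb, hab, rfl⟩

lemma exists_golombBasic_subset {U : Set ℕ+} (hU : IsOpen U) {x : ℕ+} (hx : x ∈ U) :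
    ∃ b : ℕ, 0 < b ∧ Nat.Coprime x b ∧ golombBasic x b ⊆ U := by
  induction hU generalizing x with
  | basic s hs =>
    obtain ⟨a, b, -, hb, hab, rfl⟩ := hs
    obtain ⟨n, hn⟩ := hx
    refine ⟨b, hb, ?_, ?_⟩
    · rw [hn]
      simpa using hab
    · rintro z ⟨m, hm⟩
      exact ⟨n + m, by rw [hm, hn]; ring⟩
  | univ => exact ⟨1, one_pos, Nat.coprime_one_right _, Set.subset_univ _⟩
  | inter s t _ _ ihs iht =>
    obtain ⟨b, hb, hxb, hbs⟩ := ihs hx.1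
    obtain ⟨c, hc, hxc, hct⟩ := iht hx.2
    exact ⟨b * c, Nat.mul_pos hb hc, hxb.mul_right hxc, Set.subset_inter
      ((golombBasic_mono (dvd_mul_right b c)).trans hbs)
      ((golombBasic_mono (dvd_mul_left c b)).trans hct)⟩
  | sUnion S _ ih =>
    obtain ⟨s, hs, hxs⟩ := hx
    obtain ⟨b, hb, hxb, hbs⟩ := ih s hs hxs
    exact ⟨b, hb, hxb, hbs.trans (Set.subset_sUnion_of_mem hs)⟩

lemma isOpen_of_golombBasic {U : Set ℕ+}
    (h : ∀ x ∈ U, ∃ b : ℕ, 0 < b ∧ Nat.Coprime x b ∧ golombBasic x b ⊆ U) : IsOpen U := by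
  rw [isOpen_iff_forall_mem_open]
  intro x hx
  obtain ⟨b, hb, hxb, hbU⟩ := h x hx
  exact ⟨_, hbU, isOpen_golombBasic hb hxb, mem_golombBasic_self x b⟩

/-- Chinese remainder theorem for progressions. -/
lemma golombBasic_inter_nonempty {a c : ℕ+} {b d : ℕ} (hb : 0 < b) (hd : 0 < d)
    (h : (a : ℕ) ≡ c [MOD Nat.gcd b d]) : (golombBasic a b ∩ golombBasic c d).Nonempty := by
  obtain ⟨k, hk1, hk2⟩ := Nat.chineseRemainder' h
  -- Adding a large multiple of `b * d` brings the solution above both starting points.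
  have hbd : 1 ≤ b * d := Nat.mul_pos hb hd
  set m : ℕ := k + b * d * (a + c) with hm
  have hle : (a : ℕ) + c ≤ m := by
    have := Nat.mul_le_mul_right ((a : ℕ) + c) hbd
    omega
  have ha := a.pos
  have hma : m ≡ a [MOD b] := by
    have : m ≡ k [MOD b] := by simp [hm, Nat.ModEq, mul_assoc]
    exact this.trans hk1
  have hmc : m ≡ c [MOD d] := by
    have : m ≡ k [MOD d] := by
      have : m = k + d * (b * (a + c)) := by rw [hm]; ring
      simp [this, Nat.ModEq]
    exact this.trans hk2
  refine ⟨⟨m, by omega⟩, ?_, ?_⟩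
  · obtain ⟨t, ht⟩ := (Nat.modEq_iff_dvd' (show (a : ℕ) ≤ m by omega)).1 hma.symm
    exact ⟨t, by simp only [PNat.mk_coe]; omega⟩
  · obtain ⟨t, ht⟩ := (Nat.modEq_iff_dvd' (show (c : ℕ) ≤ m by omega)).1 hmc.symm
    exact ⟨t, by simp only [PNat.mk_coe]; omega⟩

/-- A sufficient condition for `u` to lie in the closure of `c + dℕ₀`: a neighbourhood of `u` is
a progression `u + eℕ₀` with `gcd e u = 1`, so only the part of `d` coprime to `u` obstructs. -/
lemma mem_closure_golombBasic {u c : ℕ+} {d q : ℕ} (hd : 0 < d) (huc : (u : ℕ) ≡ c [MOD q])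
    (hdu : d ∣ q * u) : u ∈ closure (golombBasic c d) := by
  rw [mem_closure_iff]
  intro O hO huO
  obtain ⟨e, he, hue, heO⟩ := exists_golombBasic_subset hO huO
  have hg : Nat.gcd e d ∣ q := by
    have h1 : Nat.gcd e d ∣ q * u := (Nat.gcd_dvd_right e d).trans hdu
    have h2 : Nat.Coprime (Nat.gcd e d) u := hue.symm.coprime_dvd_left (Nat.gcd_dvd_left e d)
    exact h2.dvd_of_dvd_mul_right h1
  obtain ⟨z, hz1, hz2⟩ := golombBasic_inter_nonempty he hd (huc.of_dvd hg)
  exact ⟨z, heO hz1, hz2⟩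

lemma modEq_of_mem_closure {u c : ℕ+} {p n d : ℕ} (hp : p.Prime) (hu : ¬ p ∣ (u : ℕ))
    (hd : p ^ n ∣ d) (h : u ∈ closure (golombBasic c d)) : (u : ℕ) ≡ c [MOD p ^ n] := by
  have hop : IsOpen (golombBasic u (p ^ n)) := isOpen_golombBasic (pow_pos hp.pos n)
    (((hp.coprime_iff_not_dvd.2 hu).symm).pow_right n)
  obtain ⟨z, hz1, hz2⟩ := mem_closure_iff.1 h _ hop (mem_golombBasic_self u _)
  exact (modEq_of_mem_golombBasic hz1).symm.trans ((modEq_of_mem_golombBasic hz2).of_dvd hd)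

lemma exists_pnat_modEq_dvd {p D : ℕ} (hp : p.Prime) (hD : ¬ p ∣ D) (t N : ℕ) :
    ∃ u : ℕ+, (u : ℕ) ≡ t [MOD p ^ N] ∧ D ∣ u := by
  have hD0 : 0 < D := Nat.pos_of_ne_zero (by rintro rfl; exact hD (dvd_zero p))
  have hcop : (p ^ N).Coprime D := (hp.coprime_iff_not_dvd.2 hD).pow_left N
  obtain ⟨k, hk1, hk2⟩ := Nat.chineseRemainder hcop t 0
  have hpos : 0 < p ^ N * D := Nat.mul_pos (pow_pos hp.pos N) hD0
  refine ⟨⟨k + p ^ N * D, by omega⟩, ?_, ?_⟩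
  · have : k + p ^ N * D ≡ k [MOD p ^ N] := by simp [Nat.ModEq]
    exact this.trans hk1
  · exact dvd_add ((Nat.modEq_zero_iff_dvd).1 hk2) (dvd_mul_left _ _)

/-! ### Coprimality is a topological relation -/

/-- A relation between three points, phrased in purely topological terms: the closures of suitable
neighbourhoods of the points meet inside the closure of any given nonempty open set. For distinct
points of the Golomb space it means that they are pairwise coprime. -/
def Concentrated (x y z : ℕ+) : Prop :=
  ∀ W : Set ℕ+, IsOpen W → W.Nonempty → ∃ U V T : Set ℕ+,
    (IsOpen U ∧ x ∈ U) ∧ (IsOpen V ∧ y ∈ V) ∧ (IsOpen T ∧ z ∈ T) ∧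
      closure U ∩ closure V ∩ closure T ⊆ closure W

lemma Concentrated.map {x y z : ℕ+} (h : ℕ+ ≃ₜ ℕ+) (hc : Concentrated x y z) :
    Concentrated (h x) (h y) (h z) := by
  intro W hW hWne
  obtain ⟨U, V, T, ⟨hU, hx⟩, ⟨hV, hy⟩, ⟨hT, hz⟩, hsub⟩ := hc (h ⁻¹' W)
    (hW.preimage h.continuous) (hWne.preimage h.surjective)
  refine ⟨h '' U, h '' V, h '' T, ⟨h.isOpenMap U hU, Set.mem_image_of_mem h hx⟩,
    ⟨h.isOpenMap V hV, Set.mem_image_of_mem h hy⟩,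
    ⟨h.isOpenMap T hT, Set.mem_image_of_mem h hz⟩, ?_⟩
  rw [← h.image_closure, ← h.image_closure, ← h.image_closure, ← Set.image_inter h.injective,
    ← Set.image_inter h.injective]
  refine (Set.image_mono hsub).trans ?_
  rw [← h.preimage_closure, Set.image_preimage_eq _ h.surjective]

/-- If `p` divides `x` and `y`, closures of neighbourhoods of `x`, `y`, `z` always share a point
outside the closure `pℕ ∪ (w + p²ℕ₀)` of a suitable progression `w + p²ℕ₀`. -/
lemma Concentrated.coprime {x y z : ℕ+} (hc : Concentrated x y z) : Nat.Coprime x y := by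
  by_contra hxy
  obtain ⟨p, hp, hpx, hpy⟩ := Nat.Prime.not_coprime_iff_dvd.1 hxy
  -- `t` is the residue aimed at, and `w` avoids it modulo `p ^ 2`.
  obtain ⟨w, t, hpw, hpt, hwt, htz⟩ : ∃ w : ℕ+, ∃ t : ℕ, ¬ p ∣ (w : ℕ) ∧ ¬ p ∣ t ∧
      ¬ t ≡ w [MOD p ^ 2] ∧ (¬ p ∣ (z : ℕ) → t = z) := by
    have h1 : ¬ p ∣ 1 := hp.one_lt.ne' ∘ Nat.dvd_one.1
    have h2 : ¬ p ∣ 1 + p := fun h => h1 ((Nat.dvd_add_left (dvd_refl p)).1 h)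
    have h3 : ¬ (1 ≡ 1 + p [MOD p ^ 2]) := by
      intro h
      have h4 := (Nat.modEq_iff_dvd' (Nat.le_add_right 1 p)).1 h
      rw [Nat.add_sub_cancel_left] at h4
      have h5 := Nat.le_of_dvd hp.pos h4
      have := hp.two_le
      nlinarith
    by_cases hz : p ∣ (z : ℕ)
    · exact ⟨⟨1 + p, by omega⟩, 1, h2, h1, h3, fun h => absurd hz h⟩
    · by_cases hz1 : (z : ℕ) ≡ 1 [MOD p ^ 2]
      · exact ⟨⟨1 + p, by omega⟩, z, h2, hz, fun h => h3 (hz1.symm.trans h), fun _ => rfl⟩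
      · exact ⟨1, z, h1, hz, hz1, fun _ => rfl⟩
  obtain ⟨U, V, T, ⟨hU, hx⟩, ⟨hV, hy⟩, ⟨hT, hz⟩, hsub⟩ := hc (golombBasic w (p ^ 2))
    (isOpen_golombBasic (pow_pos hp.pos 2) (((hp.coprime_iff_not_dvd.2 hpw).symm).pow_right 2))
    ⟨w, mem_golombBasic_self w _⟩
  obtain ⟨a, ha, hxa, haU⟩ := exists_golombBasic_subset hU hx
  obtain ⟨b, hb, hyb, hbV⟩ := exists_golombBasic_subset hV hy
  obtain ⟨c, hc0, hzc, hcT⟩ := exists_golombBasic_subset hT hz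
  have hnd : ∀ {v : ℕ+} {e : ℕ}, Nat.Coprime v e → p ∣ (v : ℕ) → ¬ p ∣ e := fun hve hpv hpe =>
    Nat.not_coprime_of_dvd_of_dvd hp.one_lt hpv hpe hve
  obtain ⟨m, D, hD, habc⟩ := Nat.exists_eq_pow_mul_and_not_dvd
    (show a * b * c ≠ 0 by positivity) p hp.ne_one
  obtain ⟨u, hut, hDu⟩ := exists_pnat_modEq_dvd hp hD t (m + 2)
  have hsat : ∀ {e : ℕ}, ¬ p ∣ e → e ∣ a * b * c → e ∣ (u : ℕ) := by
    intro e hpe he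
    rw [habc] at he
    exact ((((hp.coprime_iff_not_dvd.2 hpe).symm).pow_right m).dvd_of_dvd_mul_left he).trans hDu
  have hpu : ¬ p ∣ (u : ℕ) := not_dvd_of_modEq (Nat.succ_ne_zero _) hut hpt
  have huU : u ∈ closure U := closure_mono haU <|
    mem_closure_golombBasic (q := 1) ha (Nat.modEq_one)
      (by rw [one_mul]; exact hsat (hnd hxa hpx) ⟨b * c, by ring⟩)
  have huV : u ∈ closure V := closure_mono hbV <|
    mem_closure_golombBasic (q := 1) hb (Nat.modEq_one)
      (by rw [one_mul]; exact hsat (hnd hyb hpy) ⟨a * c, by ring⟩)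
  have huT : u ∈ closure T := by
    refine closure_mono hcT ?_
    by_cases hpz : p ∣ (z : ℕ)
    · exact mem_closure_golombBasic (q := 1) hc0 (Nat.modEq_one)
        (by rw [one_mul]; exact hsat (hnd hzc hpz) ⟨a * b, by ring⟩)
    · rw [htz hpz] at hut
      refine mem_closure_golombBasic (q := p ^ m) hc0
        (hut.of_dvd (pow_dvd_pow p (Nat.le_add_right m 2))) ?_
      exact ((dvd_mul_left c (a * b)).trans (dvd_of_eq habc)).trans (mul_dvd_mul_left _ hDu)
  have huW := modEq_of_mem_closure hp hpu (dvd_refl _) (hsub ⟨⟨huU, huV⟩, huT⟩)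
  exact hwt ((hut.symm.of_dvd (pow_dvd_pow p (Nat.le_add_left 2 m))).trans huW)

/-- Each prime divides at most one of the three numbers, so neighbourhoods of the other two with a
large power of `p` in their moduli have closures meeting only in multiples of `p`. -/
lemma concentrated_of_coprime {x y z : ℕ+} (hxy : x ≠ y) (hyz : y ≠ z) (hxz : x ≠ z)
    (cxy : Nat.Coprime x y) (cyz : Nat.Coprime y z) (cxz : Nat.Coprime x z) :
    Concentrated x y z := by
  intro W hW ⟨w, hw⟩
  obtain ⟨b, hb, hwb, hbW⟩ := exists_golombBasic_subset hW hw
  set N : ℕ := x + y + z with hN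
  -- the modulus used at `v`
  let M : ℕ+ → ℕ := fun v => ∏ p ∈ b.primeFactors with ¬ p ∣ (v : ℕ), p ^ N
  have hM0 : ∀ v, 0 < M v := fun v => Finset.prod_pos fun p hp =>
    pow_pos (Nat.prime_of_mem_primeFactors (Finset.mem_filter.1 hp).1).pos N
  have hMc : ∀ v : ℕ+, Nat.Coprime v (M v) := fun v => Nat.Coprime.prod_right fun p hp =>
    (((Nat.prime_of_mem_primeFactors (Finset.mem_filter.1 hp).1).coprime_iff_not_dvd.2
      (Finset.mem_filter.1 hp).2).symm).pow_right N
  have hMd : ∀ (v : ℕ+) (p : ℕ), p ∈ b.primeFactors → ¬ p ∣ (v : ℕ) → p ^ N ∣ M v :=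
    fun v p hp hpv => Finset.dvd_prod_of_mem (fun p => p ^ N) (Finset.mem_filter.2 ⟨hp, hpv⟩)
  have hop : ∀ v : ℕ+, IsOpen (golombBasic v (M v)) ∧ v ∈ golombBasic v (M v) :=
    fun v => ⟨isOpen_golombBasic (hM0 v) (hMc v), mem_golombBasic_self v _⟩
  refine ⟨_, _, _, hop x, hop y, hop z, ?_⟩
  rintro u ⟨⟨hux, huy⟩, huz⟩
  have hpair : ∀ v v' : ℕ+, v ≠ v' → (v : ℕ) ≤ N → (v' : ℕ) ≤ N →
      u ∈ closure (golombBasic v (M v)) → u ∈ closure (golombBasic v' (M v')) →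
      ∀ p ∈ b.primeFactors, ¬ p ∣ (v : ℕ) → ¬ p ∣ (v' : ℕ) → p ∣ (u : ℕ) := by
    intro v v' hne hv hv' hu hu' p hp hpv hpv'
    by_contra hpu
    have hpp := Nat.prime_of_mem_primeFactors hp
    have h1 := modEq_of_mem_closure hpp hpu (hMd v p hp hpv) hu
    have h2 := modEq_of_mem_closure hpp hpu (hMd v' p hp hpv') hu'
    have hlt : N < p ^ N := Nat.lt_pow_self hpp.one_lt
    exact hne (PNat.coe_injective
      ((h1.symm.trans h2).eq_of_lt_of_lt (by omega) (by omega)))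
  have hrad : ∀ p ∈ b.primeFactors, p ∣ (u : ℕ) := by
    intro p hp
    have hpp := Nat.prime_of_mem_primeFactors hp
    have no : ∀ {v v' : ℕ+}, Nat.Coprime v v' → p ∣ (v : ℕ) → ¬ p ∣ (v' : ℕ) :=
      fun hvv h1 h2 => Nat.not_coprime_of_dvd_of_dvd hpp.one_lt h1 h2 hvv
    by_cases hpx : p ∣ (x : ℕ)
    · exact hpair y z hyz (by omega) (by omega) huy huz p hp (no cxy hpx) (no cxz hpx)
    · by_cases hpy : p ∣ (y : ℕ)
      · exact hpair x z hxz (by omega) (by omega) hux huz p hp hpx (no cyz hpy)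
      · exact hpair x y hxy (by omega) (by omega) hux huy p hp hpx hpy
  -- A number divisible by all primes dividing `b` lies in the closure of `w + bℕ₀`.
  refine closure_mono hbW ?_
  rw [mem_closure_iff]
  intro O hO huO
  obtain ⟨e, he, hue, heO⟩ := exists_golombBasic_subset hO huO
  have hg : Nat.gcd e b = 1 := by
    by_contra hg
    obtain ⟨p, hp, hpe, hpb⟩ := Nat.Prime.not_coprime_iff_dvd.1 hg
    exact Nat.not_coprime_of_dvd_of_dvd hp.one_lt
      (hrad p (Nat.mem_primeFactors.2 ⟨hp, hpb, hb.ne'⟩)) hpe hue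
  obtain ⟨v, hv1, hv2⟩ := golombBasic_inter_nonempty (a := u) (c := w) he hb
    (by rw [hg]; exact Nat.modEq_one)
  exact ⟨v, heO hv1, hv2⟩

lemma coprime_map_of_ne (h : ℕ+ ≃ₜ ℕ+) {x y : ℕ+} (hne : x ≠ y) (hc : Nat.Coprime x y) :
    Nat.Coprime (h x) (h y) := by
  -- The third point `x * y + 1` is coprime to both.
  have hx := x.pos
  have hy := y.pos
  have hx1 : (x : ℕ) * 1 ≤ x * y := Nat.mul_le_mul_left _ hy
  have hy1 : 1 * (y : ℕ) ≤ x * y := Nat.mul_le_mul_right _ hx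
  have hval : ((x * y + 1 : ℕ+) : ℕ) = x * y + 1 := by simp
  have h1 : x ≠ x * y + 1 := fun e => by
    have := congrArg PNat.val e
    change (x : ℕ) = ((x * y + 1 : ℕ+) : ℕ) at this
    omega
  have h2 : y ≠ x * y + 1 := fun e => by
    have := congrArg PNat.val e
    change (y : ℕ) = ((x * y + 1 : ℕ+) : ℕ) at this
    omega
  refine (concentrated_of_coprime (z := x * y + 1) hne h2 h1 hc ?_ ?_).map h |>.coprime
  · rw [hval]; simp
  · rw [hval]; simp

lemma map_one_eq (h : ℕ+ ≃ₜ ℕ+) : h 1 = 1 := by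
  by_contra hne
  -- `y = h 1` would be coprime to every other number, in particular to `y ^ 2`.
  set y := h 1 with hy
  have hlt : y < y * y := by
    have : 1 < y := lt_of_le_of_ne one_le (Ne.symm hne)
    simpa using mul_lt_mul_left this y
  obtain ⟨z, hz⟩ := h.surjective (y * y)
  have hz1 : (1 : ℕ+) ≠ z := by
    rintro rfl
    rw [← hy] at hz
    exact hlt.ne hz
  have hcop := coprime_map_of_ne h hz1 (by simp)
  rw [hz, ← hy] at hcop
  have : (y : ℕ) = 1 := by
    have h1 : Nat.Coprime y ((y : ℕ) * y) := by simpa using hcop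
    exact Nat.Coprime.eq_one_of_dvd h1 (dvd_mul_right _ _)
  exact hne (PNat.coe_injective this)

lemma coprime_map (h : ℕ+ ≃ₜ ℕ+) {x y : ℕ+} (hc : Nat.Coprime x y) :
    Nat.Coprime (h x) (h y) := by
  by_cases hne : x = y
  · subst hne
    have hx : x = 1 := PNat.coe_injective ((Nat.coprime_self _).1 hc)
    rw [hx, map_one_eq]
    simp
  · exact coprime_map_of_ne h hne hc

lemma coprime_map_iff (h : ℕ+ ≃ₜ ℕ+) {x y : ℕ+} :
    Nat.Coprime (h x) (h y) ↔ Nat.Coprime x y :=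
  ⟨fun hc => by simpa using coprime_map h.symm hc, coprime_map h⟩

/-! ### The induced permutation of the primes -/

/-- `Corr h p q`: the map `h` carries the multiples of `p` onto the multiples of `q`. -/
def Corr (h : ℕ+ ≃ₜ ℕ+) (p q : ℕ) : Prop := ∀ x : ℕ+, p ∣ (x : ℕ) ↔ q ∣ (h x : ℕ)

lemma Corr.symm {h : ℕ+ ≃ₜ ℕ+} {p q : ℕ} (hc : Corr h p q) : Corr h.symm q p := fun x => by
  rw [hc (h.symm x), h.apply_symm_apply]

lemma Corr.left_eq {h : ℕ+ ≃ₜ ℕ+} {p p' q : ℕ} (hp : p.Prime) (hp' : p'.Prime)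
    (hc : Corr h p q) (hc' : Corr h p' q) : p = p' := by
  have h1 : p' ∣ ((⟨p, hp.pos⟩ : ℕ+) : ℕ) := (hc' _).2 ((hc _).1 (dvd_refl p))
  exact ((Nat.prime_dvd_prime_iff_eq hp' hp).1 h1).symm

lemma Corr.right_eq {h : ℕ+ ≃ₜ ℕ+} {p q q' : ℕ} (hq : q.Prime) (hq' : q'.Prime)
    (hc : Corr h p q) (hc' : Corr h p q') : q = q' :=
  Corr.left_eq hq hq' hc.symm hc'.symm

lemma exists_corr (h : ℕ+ ≃ₜ ℕ+) {p : ℕ} (hp : p.Prime) : ∃ q, q.Prime ∧ Corr h p q := by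
  set P : ℕ+ := ⟨p, hp.pos⟩ with hP
  have hP1 : P ≠ 1 := fun e => hp.ne_one (congrArg PNat.val e)
  have hhP : (h P : ℕ) ≠ 1 := fun e => hP1 (h.injective (by
    rw [map_one_eq]; exact PNat.coe_injective e))
  obtain ⟨q, hq, hqd⟩ := Nat.exists_prime_and_dvd hhP
  obtain ⟨w, hw⟩ := h.surjective ⟨q, hq.pos⟩
  have hwq : (h w : ℕ) = q := by rw [hw]; rfl
  -- every number coprime to `p` is coprime to `w`, so `w` is a power of `p`
  have hw1 : (w : ℕ) ≠ 1 := fun e => by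
    have : w = 1 := PNat.coe_injective e
    rw [this, map_one_eq] at hwq
    exact hq.ne_one hwq.symm
  have hsub : ∀ z : ℕ+, Nat.Coprime P z → Nat.Coprime w z := fun z hz => by
    rw [← coprime_map_iff h, hwq]
    exact ((coprime_map_iff h).2 hz).coprime_dvd_left hqd
  have hpw : p ∣ (w : ℕ) := by
    by_contra hpw
    have hc : Nat.Coprime P w := hp.coprime_iff_not_dvd.2 hpw
    exact hw1 ((Nat.coprime_self _).1 (hsub w hc))
  refine ⟨q, hq, fun x => ?_⟩
  have h1 : p ∣ (x : ℕ) ↔ ¬ Nat.Coprime w x := by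
    constructor
    · exact fun hpx => Nat.not_coprime_of_dvd_of_dvd hp.one_lt hpw hpx
    · intro hc
      by_contra hpx
      exact hc (hsub x (hp.coprime_iff_not_dvd.2 hpx))
  rw [h1, ← coprime_map_iff h, hwq, hq.coprime_iff_not_dvd, not_not]

lemma exists_pow_iff {p : ℕ} (hp : p.Prime) (x : ℕ+) :
    (∃ k, 0 < k ∧ (x : ℕ) = p ^ k) ↔ x ≠ 1 ∧ ∀ z : ℕ+, ¬ p ∣ (z : ℕ) → Nat.Coprime x z := by
  constructor
  · rintro ⟨k, hk, hx⟩
    refine ⟨fun e => ?_, fun z hz => ?_⟩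
    · rw [e] at hx
      exact (Nat.one_lt_pow hk.ne' hp.one_lt).ne hx
    · rw [hx]
      exact (hp.coprime_iff_not_dvd.2 hz).pow_left k
  · rintro ⟨hx1, hx⟩
    have hpow : (x : ℕ) = p ^ (x : ℕ).primeFactorsList.length := by
      apply Nat.eq_prime_pow_of_unique_prime_dvd x.pos.ne'
      intro d hd hdx
      by_contra hne
      have := hx ⟨d, hd.pos⟩ (fun hpd => hne ((Nat.prime_dvd_prime_iff_eq hp hd).1 hpd).symm)
      exact Nat.not_coprime_of_dvd_of_dvd hd.one_lt hdx (dvd_refl d) this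
    refine ⟨_, Nat.pos_of_ne_zero fun e => ?_, hpow⟩
    rw [e, pow_zero] at hpow
    exact hx1 (PNat.coe_injective hpow)

lemma Corr.map_pow {h : ℕ+ ≃ₜ ℕ+} {p q : ℕ} (hp : p.Prime) (hq : q.Prime) (hc : Corr h p q)
    {x : ℕ+} (hx : ∃ k, 0 < k ∧ (x : ℕ) = p ^ k) : ∃ k, 0 < k ∧ (h x : ℕ) = q ^ k := by
  rw [exists_pow_iff hp] at hx
  rw [exists_pow_iff hq]
  refine ⟨fun e => hx.1 (h.injective (by rw [e, map_one_eq])), fun z hz => ?_⟩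
  obtain ⟨z, rfl⟩ := h.surjective z
  rw [coprime_map_iff]
  exact hx.2 z (fun hd => hz ((hc z).1 hd))

/-! ### Homeomorphisms respect the `p`-adic topologies -/

/-- A relatively clopen subset of `ℕ \ pℕ` in the Golomb topology is `p`-adically open. -/
lemma exists_modEq_subset {p : ℕ} (hp : p.Prime) {D D' : Set ℕ+} (hD : IsOpen D)
    (hD' : IsOpen D') (hdisj : Disjoint D D') (hcov : ∀ z : ℕ+, ¬ p ∣ (z : ℕ) → z ∈ D ∨ z ∈ D')
    {y : ℕ+} (hpy : ¬ p ∣ (y : ℕ)) (hy : y ∈ D) :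
    ∃ m, ∀ z : ℕ+, (z : ℕ) ≡ y [MOD p ^ m] → z ∈ D := by
  obtain ⟨b, hb, -, hbD⟩ := exists_golombBasic_subset hD hy
  obtain ⟨m, b', hpb', rfl⟩ := Nat.exists_eq_pow_mul_and_not_dvd hb.ne' p hp.ne_one
  refine ⟨m + 1, fun z hzy => ?_⟩
  by_contra hzD
  have hpz : ¬ p ∣ (z : ℕ) := not_dvd_of_modEq (Nat.succ_ne_zero m) hzy hpy
  have hzD' : z ∈ D' := (hcov z hpz).resolve_left hzD
  obtain ⟨c, hc, -, hcD'⟩ := exists_golombBasic_subset hD' hzD'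
  obtain ⟨k, c', hpc', rfl⟩ := Nat.exists_eq_pow_mul_and_not_dvd hc.ne' p hp.ne_one
  -- `u` lies in the closures of both `y + bℕ₀ ⊆ D` and `z + cℕ₀ ⊆ D'`, and outside `pℕ`.
  obtain ⟨u, huz, hu⟩ := exists_pnat_modEq_dvd hp
    (fun hd => (hp.dvd_mul.1 hd).elim hpb' hpc') z (m + 1 + k)
  have hpu : ¬ p ∣ (u : ℕ) := not_dvd_of_modEq (by omega) huz hpz
  have huD : u ∈ closure D := by
    refine closure_mono hbD (mem_closure_golombBasic (q := p ^ m) hb ?_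
      (mul_dvd_mul_left _ ((dvd_mul_right b' c').trans hu)))
    exact (huz.of_dvd (pow_dvd_pow p (by omega))).trans (hzy.of_dvd (pow_dvd_pow p (by omega)))
  have huD' : u ∈ closure D' :=
    closure_mono hcD' (mem_closure_golombBasic (q := p ^ k) hc
      (huz.of_dvd (pow_dvd_pow p (by omega))) (mul_dvd_mul_left _ ((dvd_mul_left c' b').trans hu)))
  rcases hcov u hpu with h1 | h1
  · obtain ⟨v, hv1, hv2⟩ := mem_closure_iff.1 huD' D hD h1
    exact Set.disjoint_left.1 hdisj hv1 hv2
  · obtain ⟨v, hv1, hv2⟩ := mem_closure_iff.1 huD D' hD' h1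
    exact Set.disjoint_left.1 hdisj hv2 hv1

lemma Corr.continuous_padic {h : ℕ+ ≃ₜ ℕ+} {p q : ℕ} (hp : p.Prime) (hq : q.Prime)
    (hc : Corr h p q) {y : ℕ+} (hpy : ¬ p ∣ (y : ℕ)) (n : ℕ) :
    ∃ m, ∀ z : ℕ+, (z : ℕ) ≡ y [MOD p ^ m] → (h z : ℕ) ≡ h y [MOD q ^ n] := by
  have hqy : ¬ q ∣ (h y : ℕ) := fun hd => hpy ((hc y).2 hd)
  let C : Set ℕ+ := {z | ¬ q ∣ (z : ℕ) ∧ (z : ℕ) ≡ h y [MOD q ^ (n + 1)]}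
  let C' : Set ℕ+ := {z | ¬ q ∣ (z : ℕ) ∧ ¬ (z : ℕ) ≡ h y [MOD q ^ (n + 1)]}
  have hpos := pow_pos hq.pos (n + 1)
  have hcop : ∀ z : ℕ+, ¬ q ∣ (z : ℕ) → Nat.Coprime z (q ^ (n + 1)) := fun z hz =>
    ((hq.coprime_iff_not_dvd.2 hz).symm).pow_right _
  have hC : IsOpen C := isOpen_of_golombBasic fun x hx =>
    ⟨q ^ (n + 1), hpos, hcop x hx.1, fun z hz =>
      have hzx := modEq_of_mem_golombBasic hz
      ⟨not_dvd_of_modEq (Nat.succ_ne_zero n) hzx hx.1, hzx.trans hx.2⟩⟩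
  have hC' : IsOpen C' := isOpen_of_golombBasic fun x hx =>
    ⟨q ^ (n + 1), hpos, hcop x hx.1, fun z hz =>
      have hzx := modEq_of_mem_golombBasic hz
      ⟨not_dvd_of_modEq (Nat.succ_ne_zero n) hzx hx.1, fun e => hx.2 (hzx.symm.trans e)⟩⟩
  obtain ⟨m, hm⟩ := exists_modEq_subset hp (hC.preimage h.continuous) (hC'.preimage h.continuous)
    (Set.disjoint_left.2 fun z hz hz' => hz'.2 hz.2)
    (fun z hz => by
      have hqz : ¬ q ∣ (h z : ℕ) := fun hd => hz ((hc z).2 hd)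
      by_cases hm : (h z : ℕ) ≡ h y [MOD q ^ (n + 1)]
      · exact Or.inl ⟨hqz, hm⟩
      · exact Or.inr ⟨hqz, hm⟩)
    hpy (y := y) ⟨hqy, Nat.ModEq.refl _⟩
  exact ⟨m, fun z hz => (hm z hz).2.of_dvd (pow_dvd_pow q (Nat.le_succ n))⟩

/-- `InCl p r y`: the number `y` lies in the closure of the set `{r ^ k : k ≥ 1}` in the `p`-adic
topology on `ℕ \ pℕ`. -/
def InCl (p r y : ℕ) : Prop := ¬ p ∣ y ∧ ∀ n, ∃ k, 0 < k ∧ r ^ k ≡ y [MOD p ^ n]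

lemma InCl.map {h : ℕ+ ≃ₜ ℕ+} {p q r s : ℕ} (hp : p.Prime) (hq : q.Prime) (hr : r.Prime)
    (hs : s.Prime) (hpq : Corr h p q) (hrs : Corr h r s) {y : ℕ+} (hy : InCl p r y) :
    InCl q s (h y) := by
  refine ⟨fun hd => hy.1 ((hpq y).2 hd), fun n => ?_⟩
  obtain ⟨m, hm⟩ := hpq.continuous_padic hp hq hy.1 n
  obtain ⟨k, hk, hky⟩ := hy.2 m
  obtain ⟨j, hj, hjk⟩ := hrs.map_pow hr hs (x := ⟨r ^ k, pow_pos hr.pos k⟩) ⟨k, hk, rfl⟩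
  exact ⟨j, hj, hjk ▸ hm _ hky⟩

lemma InCl.pow {p r y j : ℕ} (hp : p.Prime) (hj : 0 < j) (hy : InCl p r y) :
    InCl p r (y ^ j) := by
  refine ⟨fun hd => hy.1 (hp.dvd_of_dvd_pow hd), fun n => ?_⟩
  obtain ⟨k, hk, hky⟩ := hy.2 n
  exact ⟨k * j, Nat.mul_pos hk hj, by rw [pow_mul]; exact hky.pow j⟩

/-! ### The primes `2` and `3` -/

/-- The odd primes are those `p` for which some prime has `p`-adically dense powers; for `p = 2`
this fails already modulo `8`. -/
lemma corr_two (h : ℕ+ ≃ₜ ℕ+) : Corr h 2 2 := by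
  obtain ⟨q, hq, hc⟩ := exists_corr h Nat.prime_two
  by_cases hq2 : q = 2
  · rwa [hq2] at hc
  exfalso
  obtain ⟨r, hr, hdense⟩ := exists_prime_dense hq hq2
  obtain ⟨s, hs, hrs⟩ := exists_corr h.symm hr
  have key : ∀ y : ℕ+, ¬ 2 ∣ (y : ℕ) → InCl 2 s y := fun y hy => by
    have hqy : ¬ q ∣ (h y : ℕ) := fun hd => hy ((hc y).2 hd)
    have := InCl.map hq Nat.prime_two hr hs hc.symm hrs (y := h y) ⟨hqy, hdense _ hqy⟩
    rwa [h.symm_apply_apply] at this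
  obtain ⟨j, hj, h3⟩ := (key 3 (by decide)).2 3
  obtain ⟨k, hk, h5⟩ := (key 5 (by decide)).2 3
  change s ^ j % 8 = 3 at h3
  change s ^ k % 8 = 5 at h5
  have hs8 : s % 8 < 8 := Nat.mod_lt _ (by norm_num)
  have hcyc : ∀ i, s ^ i % 8 = 0 ∨ s ^ i % 8 = 1 ∨ s ^ i % 8 = s % 8 ∨ s ^ i % 8 = 4 := by
    intro i
    induction i with
    | zero => simp
    | succ i ih =>
      rw [pow_succ, Nat.mul_mod]
      generalize s ^ i % 8 = a at ih
      generalize s % 8 = b at ih hs8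
      rcases ih with ih | ih | ih | ih <;> rw [ih] <;> interval_cases b <;> simp
  have := hcyc j
  have := hcyc k
  omega

/-- A prime `q` is told apart from `q ^ k`, `k ≥ 2`, by closures of sets of powers. -/
lemma map_prime_eq (h : ℕ+ ≃ₜ ℕ+) {Q : ℕ+} {q : ℕ} (hQ : (Q : ℕ) = q) (hq : q.Prime)
    (hc : Corr h q q)
    (hsep : ∀ k, 2 ≤ k → ∃ p r, p.Prime ∧ r.Prime ∧ InCl p r (q ^ k) ∧ ¬ InCl p r q) :
    h Q = Q := by
  obtain ⟨k, hk, hk'⟩ := hc.map_pow hq hq (x := Q) ⟨1, one_pos, by rw [hQ, pow_one]⟩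
  rcases (show k = 1 ∨ 2 ≤ k by omega) with rfl | hk2
  · exact PNat.coe_injective (by rw [hk', pow_one, hQ])
  exfalso
  obtain ⟨p, r, hp, hr, hin, hout⟩ := hsep k hk2
  obtain ⟨p', hp', hpp'⟩ := exists_corr h.symm hp
  obtain ⟨r', hr', hrr'⟩ := exists_corr h.symm hr
  have h1 : InCl p' r' Q := by
    have := InCl.map hp hp' hr hr' hpp' hrr' (y := h Q) (by rw [hk']; exact hin)
    rwa [h.symm_apply_apply] at this
  obtain ⟨j, hj, hj'⟩ := hc.symm.map_pow hq hq (x := Q) ⟨1, one_pos, by rw [hQ, pow_one]⟩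
  have h2 : InCl p' r' (h.symm Q) := by
    rw [hj', ← hQ]
    exact h1.pow hp' hj
  have h3 := InCl.map hp' hp hr' hr hpp'.symm hrr'.symm h2
  simp only [Homeomorph.symm_symm, Homeomorph.apply_symm_apply, hQ] at h3
  exact hout h3

/-- Separation at a prime `p` with `q ^ k ≡ 1` and `q ≢ 1` modulo `p`. -/
lemma separate_of_dvd {p q k : ℕ} (hp : p.Prime) (hp2 : p ≠ 2) (h1 : q ^ k ≡ 1 [MOD p])
    (h2 : ¬ q ≡ 1 [MOD p]) :
    ∃ p r, p.Prime ∧ r.Prime ∧ InCl p r (q ^ k) ∧ ¬ InCl p r q := by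
  obtain ⟨r, hr, hr1, hcl⟩ := exists_prime_principal hp hp2
  refine ⟨p, r, hp, hr, ⟨fun hd => ?_, hcl _ h1⟩, fun hin => ?_⟩
  · exact hp.one_lt.ne' (Nat.dvd_one.1 ((Nat.ModEq.dvd_iff h1 (dvd_refl p)).1 hd))
  · obtain ⟨j, -, hj⟩ := hin.2 1
    rw [pow_one] at hj
    have := hr1.pow j
    rw [one_pow] at this
    exact h2 (hj.symm.trans this)

lemma map_two_eq (h : ℕ+ ≃ₜ ℕ+) : h 2 = 2 := by
  refine map_prime_eq h (Q := 2) (q := 2) rfl Nat.prime_two (corr_two h) fun k hk => ?_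
  have hbig : 2 ^ 2 ≤ 2 ^ k := Nat.pow_le_pow_right two_pos hk
  obtain ⟨p, hp, hpd⟩ := Nat.exists_prime_and_dvd (n := 2 ^ k - 1) (by omega)
  have h1 : 2 ^ k ≡ 1 [MOD p] := ((Nat.modEq_iff_dvd' (by omega)).2 hpd).symm
  refine separate_of_dvd hp ?_ h1 fun h2 => ?_
  · rintro rfl
    have : 2 ∣ 2 ^ k := dvd_pow_self 2 (by omega)
    omega
  · have := (Nat.modEq_iff_dvd' one_le_two).1 h2.symm
    exact hp.one_lt.ne' (Nat.dvd_one.1 this)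

/-- The prime `3` is the only odd prime without an antichain of three closures of sets of
powers. -/
lemma corr_three (h : ℕ+ ≃ₜ ℕ+) : Corr h 3 3 := by
  obtain ⟨q, hq, hc⟩ := exists_corr h Nat.prime_three
  by_cases hq3 : q = 3
  · rwa [hq3] at hc
  exfalso
  have hq2 : q ≠ 2 := by
    rintro rfl
    have := Corr.left_eq Nat.prime_three Nat.prime_two hc (corr_two h)
    omega
  have hq5 : 5 ≤ q := by
    have := hq.two_le
    have : q ≠ 4 := by rintro rfl; exact absurd hq (by norm_num)
    omega
  obtain ⟨r, hr, hanti⟩ := exists_antichain hq hq5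
  choose s hs hrs using fun i => exists_corr h.symm (hr i).1
  have hs3 : ∀ i, ¬ 3 ∣ s i := fun i hd => by
    have he := (Nat.prime_dvd_prime_iff_eq Nat.prime_three (hs i)).1 hd
    have := hrs i
    rw [← he] at this
    exact (hr i).2 (Corr.left_eq (hr i).1 hq this hc.symm)
  have hno : ∀ i j, i ≠ j → ¬ ∀ n, ∃ k, 0 < k ∧ s j ^ k ≡ s i [MOD 3 ^ n] := by
    intro i j hij hall
    obtain ⟨R, hR⟩ : ∃ R : ℕ+, (R : ℕ) = r i := ⟨⟨r i, (hr i).1.pos⟩, rfl⟩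
    obtain ⟨k, hk, hk'⟩ := (hrs i).map_pow (hr i).1 (hs i) (x := R)
      ⟨1, one_pos, by rw [hR, pow_one]⟩
    have h1 : InCl 3 (s j) (h.symm R) := by
      rw [hk']
      exact InCl.pow Nat.prime_three hk ⟨hs3 i, hall⟩
    have h2 : InCl q (r j) (h (h.symm R)) :=
      InCl.map (h := h) Nat.prime_three hq (hs j) (hr j).1 hc (hrs j).symm h1
    rw [h.apply_symm_apply, hR] at h2
    obtain ⟨m, -, hm⟩ := h2.2 3
    exact hanti i j hij m hm
  have hdiff : ∀ i j, i ≠ j → s i % 3 ≠ s j % 3 := fun i j hij he => by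
    rcases three_adic_comparable (hs3 i) (hs3 j) he with h1 | h1
    · exact hno j i hij.symm h1
    · exact hno i j hij h1
  have h01 := hdiff 0 1 (by decide)
  have h02 := hdiff 0 2 (by decide)
  have h12 := hdiff 1 2 (by decide)
  have h0 := hs3 0
  have h1 := hs3 1
  have h2 := hs3 2
  omega

lemma map_three_eq (h : ℕ+ ≃ₜ ℕ+) : h 3 = 3 := by
  refine map_prime_eq h (Q := 3) (q := 3) rfl Nat.prime_three (corr_three h) fun k hk => ?_
  rcases Nat.even_or_odd' k with ⟨m, rfl | rfl⟩
  · -- `3 ^ (2m) ≡ ±1` modulo `5`, unlike `3`; the powers of `19` are dense in `±1 + 5ℤ₅`.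
    have hnd : ∀ i, ¬ 5 ∣ 3 ^ i := fun i hd => by
      have := (by norm_num : Nat.Prime 5).dvd_of_dvd_pow hd
      omega
    refine ⟨5, 19, by norm_num, by norm_num, ⟨hnd _, nineteen_pow (hnd _) ?_⟩, fun hin => ?_⟩
    · rw [← pow_mul, mul_assoc, mul_comm m 2, ← mul_assoc, pow_mul]
      have := Nat.ModEq.pow m (show 3 ^ (2 * 2) ≡ 1 [MOD 5] by decide)
      rwa [one_pow] at this
    · obtain ⟨j, -, hj⟩ := hin.2 1
      have hj' : 19 ^ j % 5 = 3 := hj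
      have hcyc : ∀ i, 19 ^ i % 5 = 1 ∨ 19 ^ i % 5 = 4 := by
        intro i
        induction i with
        | zero => simp
        | succ i ih => omega
      have := hcyc j
      omega
  · -- For odd `k ≥ 3` the number `(3 ^ k - 1) / 2` is odd and greater than `1`.
    have h9 : ∃ t, 9 ^ m = 4 * (2 * t) + 1 := by
      have := (Nat.modEq_iff_dvd' (Nat.one_le_pow m 9 (by norm_num))).1
        (show 1 ≡ 9 ^ m [MOD 8] by
          have := Nat.ModEq.pow m (show 1 ≡ 9 [MOD 8] by decide)
          rwa [one_pow] at this)
      obtain ⟨t, ht⟩ := this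
      exact ⟨t, by have := Nat.one_le_pow m 9 (by norm_num); omega⟩
    obtain ⟨t, ht⟩ := h9
    have hpow : 3 ^ (2 * m + 1) = 2 * (12 * t + 1) + 1 := by
      rw [pow_succ, pow_mul]
      norm_num
      omega
    have ht0 : t ≠ 0 := by
      rintro rfl
      have : 9 ^ 1 ≤ 9 ^ m := Nat.pow_le_pow_right (by norm_num) (by omega)
      omega
    obtain ⟨p, hp, hpd⟩ := Nat.exists_prime_and_dvd (n := 12 * t + 1) (by omega)
    have hp2 : p ≠ 2 := by
      rintro rfl
      omega
    refine separate_of_dvd hp hp2 ?_ fun h2 => ?_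
    · rw [hpow]
      refine ((Nat.modEq_iff_dvd' (by omega)).2 ?_).symm
      rw [Nat.add_sub_cancel]
      exact hpd.mul_left 2
    · have := (Nat.modEq_iff_dvd' (by norm_num : 1 ≤ 3)).1 h2.symm
      exact hp2 ((Nat.prime_dvd_prime_iff_eq hp Nat.prime_two).1 this)

/-- Every homeomorphism of the Golomb space fixes `1`, `2` and `3`. -/
theorem golomb_homeo_fixes_small (h : ℕ+ ≃ₜ ℕ+) (n : ℕ+)
    (hn : n = 1 ∨ n = 2 ∨ n = 3) : h n = n := by
  rcases hn with rfl | rfl | rfl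
  · exact map_one_eq h
  · exact map_two_eq h
  · exact map_three_eq h
end
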